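/- arXiv:2512.01332 — 2 statements merged into one kernel-verified Lean document; each statement's English description precedes it below -/
import Mathlib

section
/- Let I_1,…,I_m be nonempty subsets of [n] and let y_1,…,y_m be positive integers. Let P := y_1Δ_{I_1} + ⋯ + y_mΔ_{I_m} ⊂ ℝ^n, where Δ_I := conv(e_i : i ∈ I). Then the number of lattice points in the Minkowski difference P − Δ_{[n]} is |(P − Δ_{[n]}) ∩ ℤ^n| = Σ_{(a_1,…,a_m) ∈ D(G)} C(y_1 + a_1 − 1, a_1) ⋯ C(y_m + a_m − 1, a_m), where D(G) is the set of sequences (a_1,…,a_m) of nonnegative integers with a_1 + ⋯ + a_m = n − 1 such that Σ_{i∈J} a_i ≤ |⋃_{i∈J} I_i| − 1 for every nonempty J ⊆ [m], and C(y, a) denotes the binomial coefficient 'y choose a'. -/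
/-!
Replacing every `I_i` by `y_i` copies of itself gives a bipartite graph `G'` with
`Y = ∑ y_i` left vertices and right vertices `[n]`.

* By Hall's theorem an integer point `w` lies in `P` iff `w([n]) = Y` and `w(T) ≤ |N(T)|` for all
  `T ⊆ [n]`, where `N` is the neighbourhood in `G'`. As `P` is convex, an integer point `x` lies in
  `P - Δ_{[n]}` iff all `x + e_j` lie in `P`, that is, iff `x([n]) = Y - 1` and
  `x(T) ≤ |N(T)| - 1` for all nonempty `T` (`mdiff_inter_latt`). These are the draconian vectors of
  `G'` on its right vertices.
* Distributing each `a_i` over the `y_i` copies of `i` shows that the right-hand side of the theorem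
  counts the draconian vectors of `G'` on its left vertices (`card_drac_swap_copyGraph`).

It remains to see that a bipartite graph has as many left as right draconian vectors
(`card_drac_swap`). This is proved by induction on the edges. When an edge `(i, j)` is added, a
vector `x` on the right becomes draconian exactly if it was obstructed by *tight* sets `T`, those
with `j ∈ T`, `i ∉ N(T)` and `x(T) = |N(T)|`. If `S` is the largest tight set and `K = N(S)`, then
`x - e_j` restricted to `S` and `x` restricted to the complement of `S` are draconian for the
subgraphs on `K ⊔ S` and on its complement, and conversely any two such vectors for a cut without
edges from `S` to the complement of `K` can be glued. Hence (`card_drac_insert`) the number of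
draconian vectors grows by a sum, over cuts separating `j` from `i` whose only edge between `S` and
the complement of `K` is `(i, j)`, of products of the corresponding numbers for the two parts. This
recursion is invariant under exchanging left and right, and so is the edgeless case.
-/

open Pointwise

noncomputable section

/-- The simplex `Δ_I := conv(e_i : i ∈ I)` in `ℝ^n`. -/
def simpA (n : ℕ) (I : Finset (Fin n)) : Set (Fin n → ℝ) :=
  convexHull ℝ ((fun j => Pi.single j (1 : ℝ)) '' ↑I)

/-- The lattice points `ℤ^n ⊆ ℝ^n`. -/
def latt (n : ℕ) : Set (Fin n → ℝ) := {x | ∀ j, ∃ z : ℤ, x j = (z : ℝ)}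

/-- Minkowski difference `A − B := {x : x + B ⊆ A}`. -/
def mdiff {n : ℕ} (A B : Set (Fin n → ℝ)) : Set (Fin n → ℝ) :=
  {x | ∀ b ∈ B, x + b ∈ A}

/-! ### Draconian vectors and left-right duality -/

section Duality

variable {α β : Type*} [DecidableEq α] [DecidableEq β]

/-- The vertices of `K` joined by an edge of `E` to some vertex of `T`. -/
def nb (E : Finset (α × β)) (K : Finset α) (T : Finset β) : Finset α :=
  K.filter fun a => ∃ b ∈ T, (a, b) ∈ E

/-- The (integer-valued) draconian vectors of the bipartite graph with left vertices `K`, right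
vertices `S` and the edges of `E` between them: vectors indexed by the right vertices, with
`x(S) = |K| - 1` and `x(T) ≤ |N(T)| - 1` for every nonempty `T ⊆ S`. They are extended by zero
outside `S`, so that vectors for different vertex sets live in one type. -/
def drac (E : Finset (α × β)) (K : Finset α) (S : Finset β) : Set (β → ℤ) :=
  {x | (∀ b ∉ S, x b = 0) ∧ ∑ b ∈ S, x b = K.card - 1 ∧
    ∀ T ⊆ S, T.Nonempty → ∑ b ∈ T, x b ≤ (nb E K T).card - 1}

theorem mem_nb {E : Finset (α × β)} {K : Finset α} {T : Finset β} {a : α} :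
    a ∈ nb E K T ↔ a ∈ K ∧ ∃ b ∈ T, (a, b) ∈ E := by
  simp [nb]

theorem nb_subset (E : Finset (α × β)) (K : Finset α) (T : Finset β) : nb E K T ⊆ K :=
  Finset.filter_subset _ _

theorem drac_finite [Fintype β] (E : Finset (α × β)) (K : Finset α) (S : Finset β) :
    (drac E K S).Finite := by
  refine ((Fintype.piFinset fun _ : β =>
    Finset.Icc (-((K.card : ℤ) + 1)) (K.card + 1)).finite_toSet).subset ?_
  intro x hx
  obtain ⟨h0, hs, hT⟩ := hx
  have hle : ∀ T ⊆ S, ∑ b ∈ T, x b ≤ K.card := by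
    intro T hTS
    rcases T.eq_empty_or_nonempty with rfl | hne
    · simp
    · have h1 := hT T hTS hne
      have h2 : ((nb E K T).card : ℤ) ≤ K.card := by
        exact Int.ofNat_le.2 (Finset.card_le_card (nb_subset E K T))
      linarith
  simp only [Finset.mem_coe, Fintype.mem_piFinset, Finset.mem_Icc]
  intro b
  by_cases hb : b ∈ S
  · have h1 := hle {b} (by simpa using hb)
    have h2 := hle (S.erase b) (Finset.erase_subset _ _)
    have h3 := Finset.add_sum_erase S x hb
    simp only [Finset.sum_singleton] at h1
    constructor <;> linarith
  · rw [h0 b hb]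
    constructor <;> linarith [Int.natCast_nonneg K.card]
  

theorem card_nb_insert (E : Finset (α × β)) {K : Finset α} {i : α} (j : β) (hi : i ∈ K)
    (T : Finset β) :
    (nb (insert (i, j) E) K T).card =
      (nb E K T).card + if j ∈ T ∧ i ∉ nb E K T then 1 else 0 := by
  by_cases hj : j ∈ T
  · have h : nb (insert (i, j) E) K T = insert i (nb E K T) := by
      ext a; simp only [mem_nb, Finset.mem_insert, Prod.mk.injEq]; grind
    rw [h]
    by_cases hn : i ∈ nb E K T
    · simp [hn]
    · simp [hn, hj]
  · have h : nb (insert (i, j) E) K T = nb E K T := by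
      ext a; simp only [mem_nb, Finset.mem_insert, Prod.mk.injEq]; grind
    simp [h, hj]

theorem card_nb_union (E : Finset (α × β)) (K : Finset α) (S T : Finset β) :
    (nb E K (S ∪ T)).card = (nb E K S).card + (nb E (K \ nb E K S) T).card := by
  rw [← Finset.card_union_of_disjoint]
  · congr 1
    ext a; simp only [Finset.mem_union, mem_nb, Finset.mem_sdiff]; grind
  · rw [Finset.disjoint_left]
    intro a; simp only [mem_nb, Finset.mem_sdiff]; grind

/-- `T` witnesses that `x`, draconian once the edge `(i, j)` is added to `E`, is not draconian
for `E` itself: `(i, j)` is the only edge from `i` to `T`, and the bound for `T` is attained. -/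
def Tight (E : Finset (α × β)) (K : Finset α) (S : Finset β) (i : α) (j : β) (x : β → ℤ)
    (T : Finset β) : Prop :=
  T ⊆ S ∧ j ∈ T ∧ i ∉ nb E K T ∧ ∑ b ∈ T, x b = (nb E K T).card

theorem sum_le_or_tight {E : Finset (α × β)} {K : Finset α} {S : Finset β} {i : α} {j : β}
    {x : β → ℤ} (hi : i ∈ K) (hx : x ∈ drac (insert (i, j) E) K S) {T : Finset β} (hT : T ⊆ S)
    (hne : T.Nonempty) :
    ∑ b ∈ T, x b ≤ (nb E K T).card - 1 ∨ Tight E K S i j x T := by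
  have h := hx.2.2 T hT hne
  rw [card_nb_insert E j hi] at h
  split_ifs at h with hc
  · push_cast at h
    by_cases he : ∑ b ∈ T, x b = (nb E K T).card
    · exact Or.inr ⟨hT, hc.1, hc.2, he⟩
    · left; omega
  · left; simpa using h

theorem drac_subset_insert {E : Finset (α × β)} {K : Finset α} {S : Finset β} {i : α} {j : β}
    (hi : i ∈ K) : drac E K S ⊆ drac (insert (i, j) E) K S := by
  rintro x ⟨h0, h1, h2⟩
  refine ⟨h0, h1, fun T hT hne => (h2 T hT hne).trans ?_⟩
  rw [card_nb_insert E j hi]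
  push_cast
  split_ifs <;> simp

theorem exists_tight {E : Finset (α × β)} {K : Finset α} {S : Finset β} {i : α} {j : β}
    {x : β → ℤ} (hi : i ∈ K) (hx : x ∈ drac (insert (i, j) E) K S) (hx' : x ∉ drac E K S) :
    ∃ T, Tight E K S i j x T := by
  by_contra! hno
  exact hx' ⟨hx.1, hx.2.1, fun T hT hne => (sum_le_or_tight hi hx hT hne).resolve_right (hno T)⟩

theorem not_mem_of_tight {E : Finset (α × β)} {K : Finset α} {S : Finset β} {i : α} {j : β}
    {x : β → ℤ} {T : Finset β} (hT : Tight E K S i j x T) : x ∉ drac E K S := by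
  intro hx
  have := hx.2.2 T hT.1 ⟨j, hT.2.1⟩
  have := hT.2.2.2
  omega

/-- Combines draconian vectors of two vertex-disjoint graphs into one for their union joined by an
edge with right end `j`. -/
def glue (j : β) (p : (β → ℤ) × (β → ℤ)) : β → ℤ := p.1 + p.2 + Pi.single j 1

theorem sum_glue {S R T : Finset β} (j : β) {u v : β → ℤ} (hu : ∀ b ∉ S, u b = 0)
    (hv : ∀ b ∉ R \ S, v b = 0) :
    ∑ b ∈ T, glue j (u, v) b =
      ∑ b ∈ T ∩ S, u b + ∑ b ∈ T \ S, v b + if j ∈ T then 1 else 0 := by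
  have h1 : ∑ b ∈ T, u b = ∑ b ∈ T ∩ S, u b := by
    symm
    apply Finset.sum_subset Finset.inter_subset_left
    intro b hb hb'
    exact hu b (by simp_all)
  have h2 : ∑ b ∈ T, v b = ∑ b ∈ T \ S, v b := by
    symm
    apply Finset.sum_subset Finset.sdiff_subset
    intro b hb hb'
    exact hv b (by simp_all)
  simp only [glue, Pi.add_apply, Finset.sum_add_distrib, h1, h2, Finset.sum_pi_single']

/-- Glued vectors are draconian for `insert (i, j) E` but not for `E`; moreover `S` is the largest
tight set of the glued vector and `K` is its neighbourhood, so the cut can be recovered. -/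
theorem glue_spec {E : Finset (α × β)} {K L : Finset α} {S R : Finset β} {i : α} {j : β}
    {u v : β → ℤ} (hS : S ⊆ R) (hK : K ⊆ L) (hj : j ∈ S) (hi : i ∈ L) (hiK : i ∉ K)
    (hE : ∀ a ∈ L \ K, ∀ b ∈ S, (a, b) ∉ E)
    (hu : u ∈ drac E K S) (hv : v ∈ drac E (L \ K) (R \ S)) :
    nb E L S = K ∧ glue j (u, v) ∈ drac (insert (i, j) E) L R ∧
      Tight E L R i j (glue j (u, v)) S ∧ ∀ U, Tight E L R i j (glue j (u, v)) U → U ⊆ S := by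
  have hsum := fun T => sum_glue (T := T) j hu.1 hv.1
  -- Since no edge of `E` joins `S` to `L \ K`, the neighbourhood of a part of `S` lies in `K`.
  have hnbS : ∀ T ⊆ S, nb E L T = nb E K T := by
    intro T hT; ext a
    simp only [mem_nb]
    constructor
    · rintro ⟨ha, b, hb, hab⟩
      refine ⟨?_, b, hb, hab⟩
      by_contra hn
      exact hE a (by simp [ha, hn]) b (hT hb) hab
    · rintro ⟨ha, h⟩; exact ⟨hK ha, h⟩
  have hsub : ∀ T, nb E K T ⊆ K := fun T => nb_subset _ _ _
  have hlow : ∀ T, ((nb E K (T ∩ S)).card : ℤ) + (nb E (L \ K) (T \ S)).card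
      ≤ (nb E L T).card := by
    intro T
    rw [← Nat.cast_add, ← Finset.card_union_of_disjoint]
    · apply Int.ofNat_le.2 (Finset.card_le_card _)
      intro a; simp only [Finset.mem_union, mem_nb, Finset.mem_sdiff, Finset.mem_inter]; grind
    · rw [Finset.disjoint_left]
      intro a; simp only [mem_nb, Finset.mem_sdiff]; grind
  have hKS : nb E K S = K := by
    apply Finset.eq_of_subset_of_card_le (hsub S)
    have h1 := hu.2.2 S subset_rfl ⟨j, hj⟩
    have h2 := hu.2.1
    omega
  have hLS : nb E L S = K := (hnbS S subset_rfl).trans hKS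
  have hsumS : ∑ b ∈ S, glue j (u, v) b = K.card := by
    rw [hsum, Finset.inter_self, Finset.sdiff_self, Finset.sum_empty, hu.2.1, if_pos hj]; ring
  refine ⟨hLS, ⟨?_, ?_, ?_⟩, ⟨hS, hj, by rwa [hLS], by rw [hLS]; exact hsumS⟩, ?_⟩
  · intro b hb
    have hbj : b ≠ j := by rintro rfl; exact hb (hS hj)
    have hbS : b ∉ S := fun h => hb (hS h)
    simp [glue, hu.1 b hbS, hv.1 b (by simp [hb]), hbj]
  · rw [hsum, Finset.inter_eq_right.2 hS, hu.2.1, hv.2.1, if_pos (hS hj)]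
    have := Finset.card_sdiff_add_card_eq_card hK
    omega
  · intro T hT hne
    rw [hsum, card_nb_insert E j hi]
    rcases (T ∩ S).eq_empty_or_nonempty with h1 | h1
    · have hjT : j ∉ T := fun h => by
        have : j ∈ T ∩ S := by simp [h, hj]
        simp [h1] at this
      have h2 : (T \ S).Nonempty := by
        obtain ⟨b, hb⟩ := hne
        refine ⟨b, Finset.mem_sdiff.2 ⟨hb, fun h => ?_⟩⟩
        have : b ∈ T ∩ S := by simp [h, hb]
        simp [h1] at this
      have h3 := hv.2.2 (T \ S) (Finset.sdiff_subset_sdiff hT subset_rfl) h2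
      have h4 := hlow T
      simp only [h1, Finset.sum_empty, hjT, false_and, if_false]
      push_cast
      omega
    · have h3 := hu.2.2 (T ∩ S) Finset.inter_subset_right h1
      rcases (T \ S).eq_empty_or_nonempty with h2 | h2
      · have hTS : T ⊆ S := Finset.sdiff_eq_empty_iff_subset.1 h2
        have hin : i ∉ nb E L T := by
          rw [hnbS T hTS]; exact fun h => hiK (hsub T h)
        rw [Finset.inter_eq_left.2 hTS] at h3 ⊢
        rw [h2, hnbS T hTS]
        rw [hnbS T hTS] at hin
        simp only [hin, not_false_eq_true, and_true, Finset.sum_empty]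
        push_cast
        omega
      · have h4 := hv.2.2 (T \ S) (Finset.sdiff_subset_sdiff hT subset_rfl) h2
        have h5 := hlow T
        push_cast
        split_ifs <;> omega
  · intro U hU
    by_contra hUS
    have h2 : (U \ S).Nonempty := Finset.sdiff_nonempty.2 hUS
    have h3 := hu.2.2 (U ∩ S) Finset.inter_subset_right ⟨j, by simp [hU.2.1, hj]⟩
    have h4 := hv.2.2 (U \ S) (Finset.sdiff_subset_sdiff hU.1 subset_rfl) h2
    have h5 := hlow U
    have h6 := hU.2.2.2
    rw [hsum, if_pos hU.2.1] at h6
    omega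

/-- Every vector that becomes draconian by adding the edge `(i, j)` arises by gluing, along the cut
given by a largest tight set `S` and its neighbourhood. -/
theorem exists_glue {E : Finset (α × β)} {L : Finset α} {R : Finset β} {i : α} {j : β}
    {x : β → ℤ} (hi : i ∈ L) (hx : x ∈ drac (insert (i, j) E) L R) (hx' : x ∉ drac E L R) :
    ∃ S ⊆ R, j ∈ S ∧ i ∉ nb E L S ∧ ∃ u ∈ drac E (nb E L S) S,
      ∃ v ∈ drac E (L \ nb E L S) (R \ S), glue j (u, v) = x := by
  classical
  obtain ⟨S, hS, hmax⟩ := Finset.exists_max_image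
    (R.powerset.filter fun T => Tight E L R i j x T) Finset.card (by
      obtain ⟨T, hT⟩ := exists_tight hi hx hx'
      exact ⟨T, by simp [hT.1, hT]⟩)
  simp only [Finset.mem_filter, Finset.mem_powerset] at hS hmax
  obtain ⟨hSR, hS⟩ := hS
  have hj := hS.2.1
  have hiS := hS.2.2.1
  have hKL : nb E L S ⊆ L := nb_subset _ _ _
  refine ⟨S, hSR, hj, hiS, fun b => (if b ∈ S then x b else 0) - Pi.single (M := fun _ => ℤ) j 1 b,
    ⟨?_, ?_, ?_⟩, fun b => if b ∈ R \ S then x b else 0, ⟨?_, ?_, ?_⟩, ?_⟩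
  · intro b hb
    have hbj : b ≠ j := by rintro rfl; exact hb hj
    simp [hb, hbj]
  · rw [Finset.sum_sub_distrib, Finset.sum_pi_single', if_pos hj, Finset.sum_ite_mem,
      Finset.inter_self, hS.2.2.2]
  · intro T hT hne
    have h1 : nb E (nb E L S) T = nb E L T := by
      ext a; simp only [mem_nb]; grind
    have hin : i ∉ nb E L T := by
      intro h; apply hiS; simp only [mem_nb] at h ⊢; grind
    have h2 := hx.2.2 T (hT.trans hSR) hne
    rw [card_nb_insert E j hi] at h2
    rw [Finset.sum_sub_distrib, Finset.sum_pi_single', Finset.sum_ite_mem,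
      Finset.inter_eq_left.2 hT, h1]
    simp only [hin, not_false_eq_true, and_true] at h2
    push_cast at h2
    omega
  · intro b hb
    simp only [if_neg hb]
  · rw [Finset.sum_ite_mem, Finset.inter_self]
    have h1 := Finset.sum_sdiff (f := x) hSR
    have h2 := hx.2.1
    have h3 := hS.2.2.2
    have h4 := Finset.card_sdiff_add_card_eq_card hKL
    omega
  · intro T hT hne
    have hdis : Disjoint S T := by
      rw [Finset.disjoint_left]; intro b hb hbT
      exact (Finset.mem_sdiff.1 (hT hbT)).2 hb
    have hTR : T ⊆ R := hT.trans Finset.sdiff_subset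
    rw [Finset.sum_ite_mem, Finset.inter_eq_left.2 hT]
    have h1 := Finset.sum_union hdis (f := x)
    have h2 := card_nb_union E L S T
    have h3 := hS.2.2.2
    -- By maximality of `S`, the set `S ∪ T` is not tight.
    have hnt : ¬ Tight E L R i j x (S ∪ T) := by
      intro h
      have h4 := hmax _ ⟨h.1, h⟩
      rw [Finset.card_union_of_disjoint hdis] at h4
      have := hne.card_pos
      omega
    have h4 := (sum_le_or_tight hi hx (Finset.union_subset hSR hTR)
      ⟨j, Finset.mem_union_left _ hj⟩).resolve_right hnt
    omega
  · funext b
    by_cases hb : b ∈ S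
    · simp [glue, hb]
    · by_cases hb' : b ∈ R
      · simp [glue, hb, hb']
      · simp [glue, hb, hb', hx.1 b hb']


/-- `drac` as a finset. -/
def dracF [Fintype β] (E : Finset (α × β)) (K : Finset α) (S : Finset β) : Finset (β → ℤ) :=
  (drac_finite E K S).toFinset

theorem mem_dracF [Fintype β] {E : Finset (α × β)} {K : Finset α} {S : Finset β} {x : β → ℤ} :
    x ∈ dracF E K S ↔ x ∈ drac E K S := by simp [dracF]

/-- The ways to split off from the vertex set `L ⊔ R` a part `K ⊔ S` containing `j` but not
`i`, such that no edge of `E` joins `S` to `L \ K`. Pairs are `(S, K)`. -/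
def splits (E : Finset (α × β)) (L : Finset α) (R : Finset β) (i : α) (j : β) :
    Finset (Finset β × Finset α) :=
  (R.powerset ×ˢ L.powerset).filter fun p =>
    j ∈ p.1 ∧ i ∉ p.2 ∧ ∀ a ∈ L \ p.2, ∀ b ∈ p.1, (a, b) ∉ E

theorem mem_splits {E : Finset (α × β)} {L : Finset α} {R : Finset β} {i : α} {j : β}
    {p : Finset β × Finset α} : p ∈ splits E L R i j ↔
      (p.1 ⊆ R ∧ p.2 ⊆ L) ∧ j ∈ p.1 ∧ i ∉ p.2 ∧ ∀ a ∈ L \ p.2, ∀ b ∈ p.1, (a, b) ∉ E := by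
  simp only [splits, Finset.mem_filter, Finset.mem_product, Finset.mem_powerset]

theorem glue_injOn {E : Finset (α × β)} {K L : Finset α} {S R : Finset β} (j : β) :
    Set.InjOn (glue j) (drac E K S ×ˢ drac E L (R \ S)) := by
  rintro ⟨u, v⟩ ⟨hu, hv⟩ ⟨u', v'⟩ ⟨hu', hv'⟩ h
  have h' : ∀ b, u b + v b = u' b + v' b := by
    intro b
    have := congrFun h b
    simpa [glue] using this
  have key : ∀ b, u b = u' b ∧ v b = v' b := by
    intro b
    have := h' b
    by_cases hb : b ∈ S
    · have h1 := hv.1 b (by simp [hb])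
      have h2 := hv'.1 b (by simp [hb])
      simp only at h1 h2
      omega
    · have h1 := hu.1 b hb
      have h2 := hu'.1 b hb
      simp only at h1 h2
      omega
  exact Prod.ext (funext fun b => (key b).1) (funext fun b => (key b).2)

/-- The recursion for the number of draconian vectors under adding an edge. The cuts and the
summands are symmetric under exchanging the two sides of the graph. -/
theorem card_drac_insert [Fintype β] {E : Finset (α × β)} {L : Finset α} {R : Finset β} {i : α}
    {j : β} (hi : i ∈ L) :
    (dracF (insert (i, j) E) L R).card = (dracF E L R).card +
      ∑ p ∈ splits E L R i j,
        (dracF E p.2 p.1).card * (dracF E (L \ p.2) (R \ p.1)).card := by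
  have hspec : ∀ p ∈ splits E L R i j, ∀ x ∈ (dracF E p.2 p.1 ×ˢ dracF E (L \ p.2) (R \ p.1)).image
      (glue j), nb E L p.1 = p.2 ∧ x ∈ drac (insert (i, j) E) L R ∧ Tight E L R i j x p.1 ∧
        ∀ U, Tight E L R i j x U → U ⊆ p.1 := by
    rintro p hp x hx
    obtain ⟨⟨u, v⟩, huv, rfl⟩ := Finset.mem_image.1 hx
    simp only [Finset.mem_product, mem_dracF] at huv
    rw [mem_splits] at hp
    exact glue_spec hp.1.1 hp.1.2 hp.2.1 hi hp.2.2.1 hp.2.2.2 huv.1 huv.2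
  have hunion : dracF (insert (i, j) E) L R = dracF E L R ∪ (splits E L R i j).biUnion fun p =>
      (dracF E p.2 p.1 ×ˢ dracF E (L \ p.2) (R \ p.1)).image (glue j) := by
    ext x
    rw [Finset.mem_union, Finset.mem_biUnion]
    constructor
    · intro hx
      by_cases hx' : x ∈ dracF E L R
      · exact Or.inl hx'
      · right
        rw [mem_dracF] at hx hx'
        obtain ⟨S, hSR, hjS, hiS, u, hu, v, hv, rfl⟩ := exists_glue hi hx hx'
        refine ⟨(S, nb E L S), mem_splits.2 ⟨⟨hSR, nb_subset _ _ _⟩, hjS, hiS, ?_⟩,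
          Finset.mem_image.2 ⟨(u, v), by simp [mem_dracF, hu, hv], rfl⟩⟩
        intro a ha b hb hab
        rw [Finset.mem_sdiff] at ha
        exact ha.2 (mem_nb.2 ⟨ha.1, b, hb, hab⟩)
    · rintro (hx | ⟨p, hp, hx⟩)
      · exact mem_dracF.2 (drac_subset_insert hi (mem_dracF.1 hx))
      · exact mem_dracF.2 (hspec p hp x hx).2.1
  rw [hunion, Finset.card_union_of_disjoint, Finset.card_biUnion]
  · congr 1
    refine Finset.sum_congr rfl fun p _ => ?_
    rw [Finset.card_image_of_injOn, Finset.card_product]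
    rintro q hq q' hq' h
    simp only [Finset.coe_product, Set.mem_prod, Finset.mem_coe, mem_dracF] at hq hq'
    exact glue_injOn j hq hq' h
  · -- A glued vector determines `p.1` as its largest tight set, and `p.2` as its neighbourhood.
    intro p hp q hq hpq
    rw [Function.onFun, Finset.disjoint_left]
    intro x hx hx'
    apply hpq
    have h1 := hspec p hp x hx
    have h2 := hspec q hq x hx'
    have h3 : p.1 = q.1 := (h2.2.2.2 _ h1.2.2.1).antisymm (h1.2.2.2 _ h2.2.2.1)
    exact Prod.ext h3 (by rw [← h1.1, ← h2.1, h3])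
  · rw [Finset.disjoint_right]
    intro x hx hx'
    obtain ⟨p, hp, hx⟩ := Finset.mem_biUnion.1 hx
    exact not_mem_of_tight (hspec p hp x hx).2.2.1 (mem_dracF.1 hx')

theorem card_drac_insert_of_not [Fintype β] {E : Finset (α × β)} {L : Finset α} {R : Finset β}
    {i : α} {j : β} (h : ¬ (i ∈ L ∧ j ∈ R)) : dracF (insert (i, j) E) L R = dracF E L R := by
  have hnb : ∀ T ⊆ R, nb (insert (i, j) E) L T = nb E L T := by
    intro T hT
    ext a
    simp only [mem_nb, Finset.mem_insert, Prod.mk.injEq]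
    grind
  ext x
  simp only [mem_dracF, drac, Set.mem_ofPred_eq]
  refine and_congr_right fun _ => and_congr_right fun _ => forall₂_congr fun T hT => ?_
  rw [hnb T hT]

theorem card_drac_empty [Fintype β] (L : Finset α) (R : Finset β) :
    (dracF (∅ : Finset (α × β)) L R).card = if L.card + R.card = 1 then 1 else 0 := by
  have hnb : ∀ T, nb (∅ : Finset (α × β)) L T = ∅ := by
    intro T; ext a; simp [mem_nb]
  have hmem : ∀ x, x ∈ dracF (∅ : Finset (α × β)) L R → L.card + R.card = 1 ∧
      ∀ b, x b = if b ∈ R then -1 else 0 := by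
    intro x hx
    rw [mem_dracF] at hx
    obtain ⟨h0, h1, h2⟩ := hx
    simp only [hnb, Finset.card_empty, Nat.cast_zero, zero_sub] at h2
    have hle : ∀ b ∈ R, x b ≤ -1 := fun b hb => by
      simpa using h2 {b} (by simpa using hb) (by simp)
    have h3 : ∑ b ∈ R, x b ≤ ∑ b ∈ R, (-1 : ℤ) := Finset.sum_le_sum hle
    simp only [Finset.sum_const, nsmul_eq_mul, mul_neg, mul_one] at h3
    have hc : L.card + R.card = 1 := by
      rcases R.eq_empty_or_nonempty with rfl | hne
      · simp at h1 ⊢; omega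
      · have := h2 R subset_rfl hne
        have := hne.card_pos
        omega
    refine ⟨hc, fun b => ?_⟩
    split_ifs with hb
    · have hR : R = {b} := by
        symm
        apply Finset.eq_of_subset_of_card_le (by simpa using hb)
        simp; omega
      have hL : L.card = 0 := by rw [hR] at hc; simpa using hc
      rw [hL, hR] at h1
      simpa using h1
    · exact h0 b hb
  split_ifs with hc
  · rw [Finset.card_eq_one]
    refine ⟨fun b => if b ∈ R then -1 else 0, Finset.eq_singleton_iff_unique_mem.2 ⟨?_, ?_⟩⟩
    · rw [mem_dracF]
      refine ⟨fun b hb => by simp [hb], ?_, fun T hT hne => ?_⟩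
      · rw [Finset.sum_ite_mem, Finset.inter_self]
        simp only [Finset.sum_const, nsmul_eq_mul, mul_neg, mul_one]
        omega
      · rw [Finset.sum_ite_mem, Finset.inter_eq_left.2 hT, hnb]
        have := hne.card_pos
        simp only [Finset.sum_const, nsmul_eq_mul, mul_neg, mul_one,
          Finset.card_empty, Nat.cast_zero]
        omega
    · intro x hx
      exact funext (hmem x hx).2
  · rw [Finset.card_eq_zero, Finset.eq_empty_iff_forall_notMem]
    exact fun x hx => hc (hmem x hx).1

/-- Left and right draconian vectors of a bipartite graph are equinumerous. -/
theorem card_drac_swap [Fintype α] [Fintype β] (E : Finset (α × β)) (L : Finset α)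
    (R : Finset β) : (dracF E L R).card = (dracF (E.image Prod.swap) R L).card := by
  induction E using Finset.induction_on generalizing L R with
  | empty => rw [Finset.image_empty, card_drac_empty, card_drac_empty, add_comm]
  | insert e E _ ih =>
    obtain ⟨i, j⟩ := e
    rw [Finset.image_insert, Prod.swap_prod_mk]
    by_cases h : i ∈ L ∧ j ∈ R
    · rw [card_drac_insert h.1, card_drac_insert h.2, ih]
      congr 1
      refine Finset.sum_nbij' (fun p => (L \ p.2, R \ p.1)) (fun q => (R \ q.2, L \ q.1))
        ?_ ?_ ?_ ?_ ?_
      · rintro ⟨S, K⟩ hp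
        simp only [mem_splits] at hp ⊢
        refine ⟨⟨Finset.sdiff_subset, Finset.sdiff_subset⟩, ?_, ?_, ?_⟩
        · simp [h.1, hp.2.2.1]
        · simp [hp.2.1]
        · intro b hb a ha hab
          rw [Finset.sdiff_sdiff_eq_self hp.1.1] at hb
          exact hp.2.2.2 a ha b hb (by simpa using hab)
      · rintro ⟨S, K⟩ hp
        simp only [mem_splits] at hp ⊢
        refine ⟨⟨Finset.sdiff_subset, Finset.sdiff_subset⟩, ?_, ?_, ?_⟩
        · simp [h.2, hp.2.2.1]
        · simp [hp.2.1]
        · intro a ha b hb hab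
          rw [Finset.sdiff_sdiff_eq_self hp.1.1] at ha
          exact hp.2.2.2 b hb a ha (by simpa using hab)
      · rintro ⟨S, K⟩ hp
        rw [mem_splits] at hp
        simp only [Finset.sdiff_sdiff_eq_self hp.1.1, Finset.sdiff_sdiff_eq_self hp.1.2]
      · rintro ⟨S, K⟩ hp
        rw [mem_splits] at hp
        simp only [Finset.sdiff_sdiff_eq_self hp.1.1, Finset.sdiff_sdiff_eq_self hp.1.2]
      · rintro ⟨S, K⟩ hp
        rw [mem_splits] at hp
        simp only [Finset.sdiff_sdiff_eq_self hp.1.1, Finset.sdiff_sdiff_eq_self hp.1.2]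
        rw [ih K S, ih (L \ K) (R \ S), mul_comm]
    · rw [card_drac_insert_of_not h, card_drac_insert_of_not (fun h' => h ⟨h'.2, h'.1⟩), ih]

end Duality

/-! ### Lattice points of the trimmed polytope -/

section Geometry

variable {n m : ℕ}

/-- The bipartite graph in which the left vertex `i`, with neighbourhood `I i`, is replaced by
`y i` copies of itself. -/
def copyGraph (I : Fin m → Finset (Fin n)) (y : Fin m → ℕ) :
    Finset ((Σ i : Fin m, Fin (y i)) × Fin n) :=
  Finset.univ.filter fun p => p.2 ∈ I p.1.1

theorem mem_copyGraph {I : Fin m → Finset (Fin n)} {y : Fin m → ℕ}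
    {p : (Σ i : Fin m, Fin (y i)) × Fin n} : p ∈ copyGraph I y ↔ p.2 ∈ I p.1.1 := by
  simp [copyGraph]

theorem card_nb_copyGraph (I : Fin m → Finset (Fin n)) (y : Fin m → ℕ) (T : Finset (Fin n)) :
    (nb (copyGraph I y) Finset.univ T).card = ∑ i with ∃ b ∈ T, b ∈ I i, y i := by
  have h : nb (copyGraph I y) Finset.univ T =
      (Finset.univ.filter fun i => ∃ b ∈ T, b ∈ I i).sigma fun i => Finset.univ := by
    ext a; simp [mem_nb, mem_copyGraph]
  rw [h, Finset.card_sigma]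
  simp

theorem simpA_subset (J : Finset (Fin n)) :
    simpA n J ⊆ {q | ∑ j, q j = 1 ∧ ∀ j, 0 ≤ q j ∧ (j ∉ J → q j = 0)} := by
  apply convexHull_min
  · rintro _ ⟨j, hj, rfl⟩
    refine ⟨by simp, fun k => ⟨?_, fun hk => ?_⟩⟩
    · by_cases h : k = j
      · subst h; simp
      · simp [h]
    · have h : k ≠ j := by rintro rfl; exact hk hj
      simp [h]
  · rintro p ⟨hp1, hp2⟩ q ⟨hq1, hq2⟩ a b ha hb hab
    refine ⟨?_, fun j => ⟨?_, fun hj => ?_⟩⟩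
    · simp only [Pi.add_apply, Pi.smul_apply, smul_eq_mul, Finset.sum_add_distrib,
        ← Finset.mul_sum, hp1, hq1]
      simpa using hab
    · have := mul_nonneg ha (hp2 j).1
      have := mul_nonneg hb (hq2 j).1
      simp only [Pi.add_apply, Pi.smul_apply, smul_eq_mul]
      linarith
    · simp [(hp2 j).2 hj, (hq2 j).2 hj]

theorem mem_sum_simpA_bounds {I : Fin m → Finset (Fin n)} {y : Fin m → ℕ} {p : Fin n → ℝ}
    (hp : p ∈ ∑ i : Fin m, (y i : ℝ) • simpA n (I i)) :
    ∑ j, p j = ∑ i, (y i : ℝ) ∧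
      ∀ T, ∑ j ∈ T, p j ≤ (nb (copyGraph I y) Finset.univ T).card := by
  obtain ⟨g, hg, rfl⟩ := (Set.mem_fintype_sum _ _).1 hp
  have hg' : ∀ i, ∃ q ∈ simpA n (I i), (y i : ℝ) • q = g i := fun i => hg i
  choose q hq hqg using hg'
  have hq' := fun i => simpA_subset (I i) (hq i)
  have hsum : ∀ T : Finset (Fin n), ∑ j ∈ T, (∑ i, g i) j = ∑ i, (y i : ℝ) * ∑ j ∈ T, q i j := by
    intro T
    simp only [Finset.sum_apply, ← hqg, Pi.smul_apply, smul_eq_mul, Finset.mul_sum]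
    rw [Finset.sum_comm]
  refine ⟨?_, fun T => ?_⟩
  · rw [hsum]
    exact Finset.sum_congr rfl fun i _ => by rw [(hq' i).1, mul_one]
  · rw [hsum, card_nb_copyGraph, Finset.sum_filter]
    push_cast
    refine Finset.sum_le_sum fun i _ => ?_
    split_ifs with h
    · have h1 : ∑ j ∈ T, q i j ≤ ∑ j, q i j :=
        Finset.sum_le_sum_of_subset_of_nonneg (Finset.subset_univ _)
          fun j _ _ => ((hq' i).2 j).1
      rw [(hq' i).1] at h1
      exact mul_le_of_le_one_right (Nat.cast_nonneg _) h1
    · push Not at h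
      rw [Finset.sum_eq_zero fun j hj => ((hq' i).2 j).2 (h j hj), mul_zero]

theorem convex_sum_simpA (I : Fin m → Finset (Fin n)) (y : Fin m → ℕ) :
    Convex ℝ (∑ i : Fin m, (y i : ℝ) • simpA n (I i)) :=
  convex_sum _ fun _ _ => (convex_convexHull ℝ _).smul _

/-- The integral transportation statement: an integer vector satisfying the inequalities of
`∑ y_i Δ_{I_i}` is a sum of basis vectors, one from each copy of each `I i`. Hall's theorem, applied
to `w j` copies of every `j`, matches these copies with the left vertices of `copyGraph I y`. -/
theorem mem_sum_simpA_of_bounds {I : Fin m → Finset (Fin n)} {y : Fin m → ℕ} (hy : ∀ i, 0 < y i)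
    {w : Fin n → ℤ} (hw0 : ∀ j, 0 ≤ w j) (hw : ∑ j, w j = ∑ i, (y i : ℤ))
    (hT : ∀ T, ∑ j ∈ T, w j ≤ (nb (copyGraph I y) Finset.univ T).card) :
    (fun j => (w j : ℝ)) ∈ ∑ i : Fin m, (y i : ℝ) • simpA n (I i) := by
  set k : Fin n → ℕ := fun j => (w j).toNat with hk
  have hkw : ∀ j, (k j : ℤ) = w j := fun j => Int.toNat_of_nonneg (hw0 j)
  obtain ⟨f, hf, hft⟩ := (Finset.all_card_le_biUnion_card_iff_exists_injective
    (fun p : Σ j : Fin n, Fin (k j) => nb (copyGraph I y) Finset.univ {p.1})).1 (by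
      intro s
      have h1 : s.biUnion (fun p : Σ j : Fin n, Fin (k j) => nb (copyGraph I y) Finset.univ {p.1})
          = nb (copyGraph I y) Finset.univ (s.image Sigma.fst) := by
        ext a
        simp [mem_nb, mem_copyGraph]
      have h2 : s.card ≤ ((s.image Sigma.fst).sigma
          fun j => (Finset.univ : Finset (Fin (k j)))).card := by
        apply Finset.card_le_card
        intro p hp
        simp only [Finset.mem_sigma, Finset.mem_univ, and_true]
        exact Finset.mem_image_of_mem _ hp
      have h3 := hT (s.image Sigma.fst)
      rw [Finset.card_sigma] at h2
      simp only [Finset.card_univ, Fintype.card_fin] at h2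
      rw [h1]
      have h4 : ((∑ j ∈ s.image Sigma.fst, k j : ℕ) : ℤ) = ∑ j ∈ s.image Sigma.fst, w j := by
        push_cast
        exact Finset.sum_congr rfl fun j _ => hkw j
      omega)
  have hbij : Function.Bijective f := by
    rw [Fintype.bijective_iff_injective_and_card]
    refine ⟨hf, ?_⟩
    simp only [Fintype.card_sigma, Fintype.card_fin]
    zify
    rw [← hw]
    exact Finset.sum_congr rfl fun j _ => hkw j
  set e := Equiv.ofBijective f hbij with he
  have hmem : ∀ a, (e.symm a).1 ∈ I a.1 := by
    intro a
    have h := hft (e.symm a)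
    have h' : f (e.symm a) = a := e.apply_symm_apply a
    rw [h'] at h
    simpa [mem_nb, mem_copyGraph] using h
  have hsum : (fun j => (w j : ℝ)) =
      ∑ i, ∑ l : Fin (y i), (Pi.single (e.symm ⟨i, l⟩).1 (1 : ℝ) : Fin n → ℝ) := by
    rw [← Fintype.sum_sigma (fun a : Σ i : Fin m, Fin (y i) =>
      (Pi.single (e.symm a).1 (1 : ℝ) : Fin n → ℝ)),
      Equiv.sum_comp e.symm (fun p : Σ j : Fin n, Fin (k j) =>
        (Pi.single p.1 (1 : ℝ) : Fin n → ℝ)), Fintype.sum_sigma]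
    funext b
    simp only [Finset.sum_const, Finset.card_univ, Fintype.card_fin, Finset.sum_apply,
      Pi.smul_apply]
    simp only [nsmul_eq_mul, Pi.single_apply, mul_ite, mul_one, mul_zero, Finset.sum_ite_eq, Finset.mem_univ,
      if_true]
    exact_mod_cast (hkw b).symm
  rw [hsum]
  refine (Set.mem_fintype_sum _ _).2 ⟨_, fun i => ?_, rfl⟩
  have hyi : (y i : ℝ) ≠ 0 := by exact_mod_cast (hy i).ne'
  refine ⟨∑ l : Fin (y i), (y i : ℝ)⁻¹ • (Pi.single (e.symm ⟨i, l⟩).1 (1 : ℝ) : Fin n → ℝ), ?_, ?_⟩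
  · refine (convex_convexHull ℝ _).sum_mem (fun _ _ => by positivity) ?_ fun l _ => ?_
    · simp [hyi]
    · exact subset_convexHull ℝ _ ⟨_, hmem ⟨i, l⟩, rfl⟩
  · simp only [← Finset.smul_sum]
    rw [smul_inv_smul₀ hyi]

/-- The lattice points of the trimmed polytope are the draconian vectors of `copyGraph I y` on its
right vertices. -/
theorem mdiff_inter_latt (hn : 0 < n) {I : Fin m → Finset (Fin n)} {y : Fin m → ℕ}
    (hy : ∀ i, 0 < y i) :
    mdiff (∑ i : Fin m, (y i : ℝ) • simpA n (I i)) (simpA n Finset.univ) ∩ latt n =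
      (fun (z : Fin n → ℤ) j => (z j : ℝ)) ''
        drac (copyGraph I y) Finset.univ Finset.univ := by
  have hcard : (((Finset.univ : Finset (Σ i : Fin m, Fin (y i))).card : ℕ) : ℤ)
      = ∑ i, (y i : ℤ) := by simp
  have hadd : ∀ (z : Fin n → ℤ) (j : Fin n), (fun k => (z k : ℝ)) + Pi.single j 1 =
      fun k => (((z + Pi.single j 1 : Fin n → ℤ) k : ℤ) : ℝ) := by
    intro z j; funext k
    by_cases h : k = j
    · subst h; simp
    · simp [h]
  have hsum : ∀ (z : Fin n → ℤ) (j : Fin n) (T : Finset (Fin n)),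
      ∑ k ∈ T, (z + Pi.single j 1 : Fin n → ℤ) k = ∑ k ∈ T, z k + if j ∈ T then 1 else 0 := by
    intro z j T
    simp only [Pi.add_apply, Finset.sum_add_distrib, Finset.sum_pi_single']
  ext x
  constructor
  · rintro ⟨hx, hl⟩
    choose z hz using hl
    obtain rfl : x = fun j => (z j : ℝ) := funext hz
    have hb : ∀ j, (∑ k, z k + 1 = ∑ i, (y i : ℤ)) ∧ ∀ T, j ∈ T →
        ∑ k ∈ T, z k + 1 ≤ (nb (copyGraph I y) Finset.univ T).card := by
      intro j
      have h1 := mem_sum_simpA_bounds (hx (Pi.single j 1)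
        (subset_convexHull ℝ _ ⟨j, by simp, rfl⟩))
      rw [hadd] at h1
      refine ⟨?_, fun T hT => ?_⟩
      · have h2 : ∑ k, (((z + Pi.single j 1 : Fin n → ℤ) k : ℤ) : ℝ) = _ := h1.1
        have h3 := hsum z j Finset.univ
        rw [if_pos (Finset.mem_univ _)] at h3
        rw [← h3]
        exact_mod_cast h2
      · have h2 : ∑ k ∈ T, (((z + Pi.single j 1 : Fin n → ℤ) k : ℤ) : ℝ) ≤ _ := h1.2 T
        have h3 := hsum z j T
        rw [if_pos hT] at h3
        rw [← h3]
        exact_mod_cast h2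
    refine ⟨z, ⟨by simp, ?_, fun T _ hne => ?_⟩, rfl⟩
    · have := (hb ⟨0, hn⟩).1
      rw [hcard]
      omega
    · obtain ⟨j, hj⟩ := hne
      have := (hb j).2 T hj
      omega
  · rintro ⟨z, ⟨-, h1, h2⟩, rfl⟩
    rw [hcard] at h1
    refine ⟨?_, fun j => ⟨z j, rfl⟩⟩
    have hle : ∀ T : Finset (Fin n), (nb (copyGraph I y) Finset.univ T).card ≤ ∑ i, (y i : ℤ) := by
      intro T
      rw [← hcard]
      exact Int.ofNat_le.2 (Finset.card_le_card (nb_subset (copyGraph I y) Finset.univ T))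
    -- The polytope is convex, so it suffices to translate by the vertices of `Δ_{[n]}`.
    have key : ∀ j, (fun k => (z k : ℝ)) + Pi.single j 1 ∈
        ∑ i : Fin m, (y i : ℝ) • simpA n (I i) := by
      intro j
      rw [hadd]
      have hb : ∀ T, ∑ k ∈ T, (z + Pi.single j 1 : Fin n → ℤ) k ≤
          (nb (copyGraph I y) Finset.univ T).card := by
        intro T
        rw [hsum]
        rcases T.eq_empty_or_nonempty with rfl | hne
        · simp
        · have := h2 T (Finset.subset_univ _) hne
          split_ifs <;> omega
      have htot : ∑ k, (z + Pi.single j 1 : Fin n → ℤ) k = ∑ i, (y i : ℤ) := by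
        rw [hsum, if_pos (Finset.mem_univ _)]; omega
      refine mem_sum_simpA_of_bounds hy (fun k => ?_) htot hb
      -- Coordinates are nonnegative: the others sum to at most the total `∑ y i`.
      have h3 := hb (Finset.univ.erase k)
      have h4 := hle (Finset.univ.erase k)
      have h5 := Finset.add_sum_erase Finset.univ (z + Pi.single j 1 : Fin n → ℤ) (Finset.mem_univ k)
      linarith
    have hsub : simpA n Finset.univ ⊆ (fun b => (fun k => (z k : ℝ)) + b) ⁻¹'
        (∑ i : Fin m, (y i : ℝ) • simpA n (I i)) := by
      apply convexHull_min
      · rintro _ ⟨j, -, rfl⟩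
        exact key j
      · exact (convex_sum_simpA I y).translate_preimage_right _
    exact fun b hb => hsub hb

end Geometry

/-! ### Draconian sequences with multiplicities -/

section Draconian

variable {n m : ℕ}

/-- The `G`-draconian sequences as a finset; each entry is at most `n - 1`. -/
def draconian (I : Fin m → Finset (Fin n)) : Finset (Fin m → ℕ) :=
  (Fintype.piFinset fun _ => Finset.range n).filter fun a => (∑ i, a i) = n - 1 ∧
    ∀ J : Finset (Fin m), J.Nonempty → (∑ i ∈ J, a i) ≤ (J.biUnion I).card - 1

theorem coe_draconian (hn : 0 < n) (I : Fin m → Finset (Fin n)) :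
    (draconian I : Set (Fin m → ℕ)) = {a : Fin m → ℕ | (∑ i, a i) = n - 1 ∧
      ∀ J : Finset (Fin m), J.Nonempty → (∑ i ∈ J, a i) ≤ (J.biUnion I).card - 1} := by
  ext a
  simp only [draconian, Finset.coe_filter, Fintype.mem_piFinset, Finset.mem_range,
    Set.mem_ofPred_eq, and_iff_right_iff_imp]
  rintro ⟨h, -⟩ i
  have := Finset.single_le_sum (f := a) (fun _ _ => Nat.zero_le _) (Finset.mem_univ i)
  omega

theorem nb_swap_copyGraph (I : Fin m → Finset (Fin n)) (y : Fin m → ℕ)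
    (J : Finset (Σ i : Fin m, Fin (y i))) :
    nb ((copyGraph I y).image Prod.swap) Finset.univ J = (J.image Sigma.fst).biUnion I := by
  ext b
  simp [mem_nb, mem_copyGraph]

theorem nonneg_of_mem_drac_swap (hn : 0 < n) {I : Fin m → Finset (Fin n)} {y : Fin m → ℕ}
    {x : (Σ i : Fin m, Fin (y i)) → ℤ}
    (hx : x ∈ drac ((copyGraph I y).image Prod.swap) Finset.univ Finset.univ)
    (p : Σ i : Fin m, Fin (y i)) : 0 ≤ x p := by
  obtain ⟨-, h1, h2⟩ := hx
  have h3 := Finset.add_sum_erase Finset.univ x (Finset.mem_univ p)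
  rw [Finset.card_univ, Fintype.card_fin] at h1
  rcases (Finset.univ.erase p).eq_empty_or_nonempty with h | h
  · rw [h, Finset.sum_empty] at h3
    omega
  · have h4 := h2 _ (Finset.subset_univ _) h
    have h5 := Finset.card_le_card
      (nb_subset ((copyGraph I y).image Prod.swap) Finset.univ (Finset.univ.erase p))
    rw [Finset.card_univ, Fintype.card_fin] at h5
    omega

/-- Summing over the copies of each left vertex turns the draconian condition for `copyGraph I y`
into that for `I`: the constraint is strongest for sets containing all copies of a vertex or none. -/
theorem mem_drac_swap_iff (hn : 0 < n) {I : Fin m → Finset (Fin n)} (hI : ∀ i, (I i).Nonempty)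
    {y : Fin m → ℕ} (hy : ∀ i, 0 < y i) (b : (Σ i : Fin m, Fin (y i)) → ℕ) :
    (fun p => (b p : ℤ)) ∈ drac ((copyGraph I y).image Prod.swap) Finset.univ Finset.univ ↔
      (fun i => ∑ l, b ⟨i, l⟩) ∈ draconian I := by
  rw [← Finset.mem_coe, coe_draconian hn]
  have hpos : ∀ J : Finset (Fin m), J.Nonempty → 0 < (J.biUnion I).card := by
    rintro J ⟨i, hi⟩
    obtain ⟨k, hk⟩ := hI i
    exact Finset.card_pos.2 ⟨k, Finset.mem_biUnion.2 ⟨i, hi, hk⟩⟩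
  have htot : ∑ p, (b p : ℤ) = ((∑ i, ∑ l, b ⟨i, l⟩ : ℕ) : ℤ) := by
    rw [Fintype.sum_sigma]; push_cast; rfl
  have hn' : ((Finset.univ : Finset (Fin n)).card : ℤ) = n := by simp
  constructor
  · rintro ⟨-, h1, h2⟩
    refine ⟨?_, fun J hJ => ?_⟩
    · rw [htot, hn'] at h1
      show ∑ i, ∑ l, b ⟨i, l⟩ = n - 1
      omega
    · have hne : (J.sigma fun i => (Finset.univ : Finset (Fin (y i)))).Nonempty := by
        obtain ⟨i, hi⟩ := hJ
        exact ⟨⟨i, ⟨0, hy i⟩⟩, by simp [hi]⟩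
      have h3 := h2 _ (Finset.subset_univ _) hne
      have h4 : (J.sigma fun i => (Finset.univ : Finset (Fin (y i)))).image Sigma.fst = J := by
        ext i
        simp only [Finset.mem_image, Finset.mem_sigma, Finset.mem_univ, and_true]
        exact ⟨by rintro ⟨p, hp, rfl⟩; exact hp, fun hi => ⟨⟨i, ⟨0, hy i⟩⟩, hi, rfl⟩⟩
      rw [nb_swap_copyGraph, h4, Finset.sum_sigma] at h3
      have h5 := hpos J hJ
      have h6 : ∑ i ∈ J, ∑ l, (b ⟨i, l⟩ : ℤ) = ((∑ i ∈ J, ∑ l, b ⟨i, l⟩ : ℕ) : ℤ) := by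
        push_cast; rfl
      rw [h6] at h3
      show ∑ i ∈ J, ∑ l, b ⟨i, l⟩ ≤ _
      omega
  · rintro ⟨h1, h2⟩
    refine ⟨by simp, ?_, fun T _ hT => ?_⟩
    · rw [htot, hn']
      have h1' : ∑ i, ∑ l, b ⟨i, l⟩ = n - 1 := h1
      omega
    · rw [nb_swap_copyGraph]
      have hJ : (T.image Sigma.fst).Nonempty := hT.image _
      have h3 : ∑ i ∈ T.image Sigma.fst, ∑ l, b ⟨i, l⟩ ≤ _ := h2 _ hJ
      have h4 : ∑ p ∈ T, b p ≤ ∑ p ∈ (T.image Sigma.fst).sigma fun i => Finset.univ, b p := by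
        apply Finset.sum_le_sum_of_subset
        intro p hp
        simp only [Finset.mem_sigma, Finset.mem_univ, and_true]
        exact Finset.mem_image_of_mem _ hp
      rw [Finset.sum_sigma] at h4
      have h5 := hpos _ hJ
      rw [← Nat.cast_sum]
      omega

/-- A draconian sequence `a` has `∏ i, multichoose (y i) (a i)` liftings to `copyGraph I y`, since
the value `a i` may be distributed freely over the `y i` copies of `i`. -/
theorem card_drac_swap_copyGraph (hn : 0 < n) {I : Fin m → Finset (Fin n)}
    (hI : ∀ i, (I i).Nonempty) {y : Fin m → ℕ} (hy : ∀ i, 0 < y i) :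
    (dracF ((copyGraph I y).image Prod.swap) Finset.univ Finset.univ).card =
      ∑ a ∈ draconian I, ∏ i, Nat.choose (y i + a i - 1) (a i) := by
  have hcast : ∀ x ∈ dracF ((copyGraph I y).image Prod.swap) Finset.univ Finset.univ,
      (fun p => ((x p).toNat : ℤ)) = x := fun x hx =>
    funext fun p => Int.toNat_of_nonneg (nonneg_of_mem_drac_swap hn (mem_dracF.1 hx) p)
  rw [Finset.card_eq_sum_card_fiberwise (t := draconian I)
    (f := fun x i => ∑ l, (x ⟨i, l⟩).toNat)]
  · refine Finset.sum_congr rfl fun a ha => ?_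
    have hcard : ∏ i, Nat.choose (y i + a i - 1) (a i) = (Fintype.piFinset fun i =>
        Finset.finsuppAntidiag (Finset.univ : Finset (Fin (y i))) (a i)).card := by
      rw [Fintype.card_piFinset]
      refine Finset.prod_congr rfl fun i _ => ?_
      rw [Finset.card_finsuppAntidiag_nat_eq_choose, Finset.card_univ, Fintype.card_fin]
    rw [hcard]
    symm
    refine Finset.card_bij (fun φ _ p => ((φ p.1 p.2 : ℕ) : ℤ)) ?_ ?_ ?_
    · intro φ hφ
      simp only [Fintype.mem_piFinset, Finset.mem_finsuppAntidiag] at hφ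
      have hs : (fun i => ∑ l, φ i l) = a := funext fun i => (hφ i).1
      rw [Finset.mem_filter, mem_dracF, mem_drac_swap_iff hn hI hy (fun p => φ p.1 p.2)]
      simp only [Int.toNat_natCast]
      exact ⟨by rwa [hs], hs⟩
    · intro φ _ ψ _ h
      funext i
      ext l
      exact_mod_cast congrFun h ⟨i, l⟩
    · intro x hx
      obtain ⟨hx, hxa⟩ := Finset.mem_filter.1 hx
      refine ⟨fun i => Finsupp.equivFunOnFinite.symm fun l => (x ⟨i, l⟩).toNat, ?_, hcast x hx⟩
      simp only [Fintype.mem_piFinset, Finset.mem_finsuppAntidiag]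
      exact fun i => ⟨congrFun hxa i, Finset.subset_univ _⟩
  · intro x hx
    rw [Finset.mem_coe] at hx ⊢
    rw [← mem_drac_swap_iff hn hI hy (fun p => (x p).toNat), hcast x hx]
    exact mem_dracF.1 hx

end Draconian

/-- Postnikov: For nonempty `I_1,…,I_m ⊆ [n]` and positive integers `y_i`, with
`P := y_1Δ_{I_1} + ⋯ + y_mΔ_{I_m}`, the number of lattice points of `P − Δ_{[n]}` is
`Σ_{a ∈ D(G)} C(y_1+a_1−1,a_1) ⋯ C(y_m+a_m−1,a_m)`, where `D(G)` is the set of G-draconian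
sequences: `Σ a_i = n−1` and `Σ_{i∈J} a_i ≤ |⋃_{i∈J} I_i| − 1` for all nonempty `J ⊆ [m]`. -/
theorem stmt15 (n m : ℕ) (I : Fin m → Finset (Fin n)) (hI : ∀ i, (I i).Nonempty)
    (y : Fin m → ℕ) (hy : ∀ i, 0 < y i) :
    (mdiff (∑ i : Fin m, (y i : ℝ) • simpA n (I i)) (simpA n Finset.univ) ∩ latt n).ncard =
      ∑ᶠ a ∈ {a : Fin m → ℕ | (∑ i, a i) = n - 1 ∧
          ∀ J : Finset (Fin m), J.Nonempty → (∑ i ∈ J, a i) ≤ (J.biUnion I).card - 1},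
        ∏ i, Nat.choose (y i + a i - 1) (a i) := by
  rcases Nat.eq_zero_or_pos n with rfl | hn
  · -- `ℝ^0` is a point and `Δ_∅` is empty, so both sides are `1`.
    obtain rfl : m = 0 := by
      by_contra h
      obtain ⟨j, -⟩ := hI ⟨0, Nat.pos_of_ne_zero h⟩
      exact j.elim0
    have h1 : mdiff (∑ i : Fin 0, (y i : ℝ) • simpA 0 (I i)) (simpA 0 Finset.univ) ∩ latt 0 =
        {0} := by
      ext x
      simp [mdiff, latt, simpA, Subsingleton.elim x 0]
    have h2 : {a : Fin 0 → ℕ | (∑ i, a i) = 0 - 1 ∧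
        ∀ J : Finset (Fin 0), J.Nonempty → (∑ i ∈ J, a i) ≤ (J.biUnion I).card - 1} = {0} := by
      ext a
      simp [Subsingleton.elim a 0, Finset.eq_empty_of_isEmpty]
    rw [h1, h2, Set.ncard_singleton, finsum_mem_singleton]
    simp
  · have hinj : Function.Injective (fun (z : Fin n → ℤ) j => (z j : ℝ)) := fun z w h =>
      funext fun j => Int.cast_injective (congrFun h j)
    rw [mdiff_inter_latt hn hy, Set.ncard_image_of_injective _ hinj, ← coe_draconian hn,
      finsum_mem_coe_finset, ← card_drac_swap_copyGraph hn hI hy, ← card_drac_swap, dracF,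
      Set.ncard_eq_toFinset_card _ (drac_finite _ _ _)]
end
end

section
/- Let P ⊂ ℝ^n be a polytope each of whose edges (one-dimensional faces) is parallel to e_i − e_j for some 1 ≤ i < j ≤ n, i.e., P is a type A generalized permutohedron. Then there exist real numbers y_I, indexed by the nonempty subsets I ⊆ [n], such that P + Σ_{I : y_I < 0} (−y_I)Δ_I = Σ_{I : y_I ≥ 0} y_IΔ_I, i.e., P is the signed Minkowski sum Σ_{I ⊆ [n], I ≠ ∅} y_IΔ_I of the simplices Δ_I. -/
/-!
A compact convex set is determined by its support function `h_P(c) = max_{x ∈ P} ⟨c, x⟩`, which is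
additive in `P` and, for `P = Δ_I`, equal to `max_{i ∈ I} c_i`. So it suffices to find `y` with
`h_P(c) = ∑ y_I max_{i ∈ I} c_i` for all `c`; moving the terms with `y_I < 0` to the other side then
gives the identity of Minkowski sums.

Both sides are linear on the chambers of the braid arrangement, i.e. `h(c + d) = h(c) + h(d)`
whenever `c` and `d` are comonotone (`(c_i - c_j) (d_i - d_j) ≥ 0` for all `i, j`). For the maxima
this is elementary. For `h_P` it says that `c` and `d` have a common maximizer on `P`
(`exists_common_max`), and this is where the edge directions enter: take the vertex `v` maximizing a
generic small perturbation of `c + d`. If `v` did not maximize `c`, some edge `[v, w]` of `P` would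
improve `c` (`exists_improving_edge`, a pivot step of the simplex method). As `w - v` is a multiple
of `e_i - e_j`, comonotonicity gives `⟨d, w - v⟩ ≥ 0`, so `w` would also improve `c + d`, although
`v` maximizes it.

A comonotone additive, positively homogeneous function vanishes as soon as it vanishes at the
indicator vectors of subsets (`eq_zero_of_comonotone`), so only the equations
`h_P(1_S) = ∑_{I ∩ S ≠ ∅} y_I` have to be solved; Möbius inversion on the Boolean lattice does this
(`exists_coeff`).
-/


open Pointwise

noncomputable section

/-! ### Support functions -/

/-- `SupVal A c m` says that `m` is the value at `c` of the support function of `A`, and that this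
value is attained: `m = max_{x ∈ A} ⟨c, x⟩`. -/
def SupVal {n : ℕ} (A : Set (Fin n → ℝ)) (c : Fin n → ℝ) (m : ℝ) : Prop :=
  IsGreatest ((fun x => c ⬝ᵥ x) '' A) m

lemma SupVal.add {n : ℕ} {A B : Set (Fin n → ℝ)} {c : Fin n → ℝ} {m m' : ℝ}
    (hA : SupVal A c m) (hB : SupVal B c m') : SupVal (A + B) c (m + m') := by
  obtain ⟨⟨a, ha, rfl⟩, hA⟩ := hA
  obtain ⟨⟨b, hb, rfl⟩, hB⟩ := hB
  refine ⟨⟨a + b, Set.add_mem_add ha hb, dotProduct_add _ _ _⟩, ?_⟩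
  rintro _ ⟨_, ⟨x, hx, y, hy, rfl⟩, rfl⟩
  have h1 := hA ⟨x, hx, rfl⟩
  have h2 := hB ⟨y, hy, rfl⟩
  simp only [dotProduct_add] at *
  linarith

lemma SupVal.smul {n : ℕ} {A : Set (Fin n → ℝ)} {c : Fin n → ℝ} {m t : ℝ}
    (hA : SupVal A c m) (ht : 0 ≤ t) : SupVal (t • A) c (t * m) := by
  obtain ⟨⟨a, ha, rfl⟩, hA⟩ := hA
  refine ⟨⟨t • a, Set.smul_mem_smul_set ha, by simp [dotProduct_smul]⟩, ?_⟩
  rintro _ ⟨_, ⟨x, hx, rfl⟩, rfl⟩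
  have h1 := hA ⟨x, hx, rfl⟩
  simp only [dotProduct_smul, smul_eq_mul] at *
  exact mul_le_mul_of_nonneg_left h1 ht

lemma SupVal.sum {n : ℕ} {ι : Type*} (s : Finset ι) {A : ι → Set (Fin n → ℝ)} {c : Fin n → ℝ}
    {m : ι → ℝ} (h : ∀ i ∈ s, SupVal (A i) c (m i)) :
    SupVal (∑ i ∈ s, A i) c (∑ i ∈ s, m i) := by
  classical
  induction s using Finset.induction_on with
  | empty => simp [SupVal, ← Set.singleton_zero]
  | insert a s ha ih =>
    rw [Finset.sum_insert ha, Finset.sum_insert ha]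
    exact (h a (Finset.mem_insert_self _ _)).add
      (ih fun i hi => h i (Finset.mem_insert_of_mem hi))

/-- The maximum of a linear functional on the hull of a set is the one on the set. -/
lemma supVal_convexHull {n : ℕ} {V : Set (Fin n → ℝ)} {c v : Fin n → ℝ} (hv : v ∈ V)
    (hmax : ∀ w ∈ V, c ⬝ᵥ w ≤ c ⬝ᵥ v) : SupVal (convexHull ℝ V) c (c ⬝ᵥ v) := by
  refine ⟨⟨v, subset_convexHull ℝ V hv, rfl⟩, ?_⟩
  rintro _ ⟨x, hx, rfl⟩
  have hconv : Convex ℝ {x : Fin n → ℝ | c ⬝ᵥ x ≤ c ⬝ᵥ v} :=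
    convex_halfSpace_le (f := fun x => c ⬝ᵥ x)
      ⟨fun _ _ => dotProduct_add _ _ _, fun _ _ => dotProduct_smul _ _ _⟩ _
  exact convexHull_min (fun w hw => hmax w hw) hconv hx

lemma SupVal.unique {n : ℕ} {A : Set (Fin n → ℝ)} {c : Fin n → ℝ} {m m' : ℝ}
    (h : SupVal A c m) (h' : SupVal A c m') : m = m' :=
  IsGreatest.unique h h'

/-- One half of the fact that a closed convex set is determined by its support function. -/
lemma subset_of_supVal {n : ℕ} {A B : Set (Fin n → ℝ)} (hB : Convex ℝ B) (hBc : IsClosed B)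
    (h : ∀ c, ∃ m, SupVal A c m ∧ SupVal B c m) : A ⊆ B := by
  intro a ha
  by_contra hab
  obtain ⟨f, u, hu, hfa⟩ := geometric_hahn_banach_closed_point hB hBc hab
  obtain ⟨g, hg⟩ := (dotProductEquiv ℝ (Fin n)).surjective (f : (Fin n → ℝ) →ₗ[ℝ] ℝ)
  have hf : ∀ x, f x = g ⬝ᵥ x := fun x => (congrArg (fun φ => φ x) hg).symm
  obtain ⟨m, hA, ⟨b, hb, rfl⟩, -⟩ := h g
  have h1 := hA.2 ⟨a, ha, rfl⟩
  have h2 := hu b hb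
  simp only [← hf] at h1
  linarith

/-! ### Comonotone additivity of the support function -/

/-- Two vectors are comonotone if no pair of coordinates is ordered oppositely by them, i.e. if
they lie in a common closed chamber of the braid arrangement. -/
def Comonotone {n : ℕ} (c d : Fin n → ℝ) : Prop :=
  ∀ i j, 0 ≤ (c i - c j) * (d i - d j)

/-- Finitely many nonzero vectors are avoided by the kernel of some functional. -/
lemma exists_generic {n : ℕ} (U : Set (Fin n → ℝ)) (hU : U.Finite) :
    ∃ b : Fin n → ℝ, ∀ u ∈ U, u ≠ 0 → b ⬝ᵥ u ≠ 0 := by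
  have : Finite {u // u ∈ U ∧ u ≠ 0} := (hU.subset fun u hu => hu.1 : {u | u ∈ U ∧ u ≠ 0}.Finite)
  obtain ⟨f, hf⟩ := Module.exists_dual_forall_apply_ne_zero (K := ℝ)
    (fun u : {u // u ∈ U ∧ u ≠ 0} => u.1) fun u => u.2.2
  obtain ⟨b, rfl⟩ := (dotProductEquiv ℝ (Fin n)).surjective f
  exact ⟨b, fun u hu h0 => hf ⟨u, hu, h0⟩⟩

/-- If all maximizers of `l` in `V` differ from `v` by multiples of `e`, then so do all maximizers
of `l` in the hull of `V`. -/
lemma face_direction {n : ℕ} {V : Set (Fin n → ℝ)} {l v e : Fin n → ℝ}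
    (h : ∀ w ∈ V, l ⬝ᵥ w ≤ l ⬝ᵥ v ∧
      (l ⬝ᵥ w = l ⬝ᵥ v → w - v ∈ Submodule.span ℝ {e})) :
    ∀ x ∈ convexHull ℝ V, l ⬝ᵥ x ≤ l ⬝ᵥ v ∧
      (l ⬝ᵥ x = l ⬝ᵥ v → x - v ∈ Submodule.span ℝ {e}) := by
  refine fun x hx => convexHull_min (t := {x | l ⬝ᵥ x ≤ l ⬝ᵥ v ∧
      (l ⬝ᵥ x = l ⬝ᵥ v → x - v ∈ Submodule.span ℝ {e})}) h ?_ hx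
  rw [convex_iff_forall_pos]
  rintro x ⟨hx, hx'⟩ y ⟨hy, hy'⟩ α β hα hβ hαβ
  simp only [Set.mem_ofPred_eq, dotProduct_add, dotProduct_smul, smul_eq_mul]
  have hβ' : β = 1 - α := by linarith
  have e1 := mul_le_mul_of_nonneg_left hx hα.le
  have e2 := mul_le_mul_of_nonneg_left hy hβ.le
  have e3 : α * (l ⬝ᵥ v) + β * (l ⬝ᵥ v) = l ⬝ᵥ v := by rw [← add_mul, hαβ, one_mul]
  refine ⟨by linarith, fun heq => ?_⟩
  have hx1 : l ⬝ᵥ x = l ⬝ᵥ v := mul_left_cancel₀ hα.ne' (by linarith)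
  have hy1 : l ⬝ᵥ y = l ⬝ᵥ v := mul_left_cancel₀ hβ.ne' (by linarith)
  have : α • x + β • y - v = α • (x - v) + β • (y - v) := by
    subst hβ'; module
  rw [this]
  exact Submodule.add_mem _ (Submodule.smul_mem _ _ (hx' hx1)) (Submodule.smul_mem _ _ (hy' hy1))

/-- The dot product with `l`, as a continuous linear functional. -/
def dotL {n : ℕ} (l : Fin n → ℝ) : StrongDual ℝ (Fin n → ℝ) :=
  LinearMap.toContinuousLinearMap (dotProductBilin ℝ ℝ l)

lemma dotL_apply {n : ℕ} (l x : Fin n → ℝ) : dotL l x = l ⬝ᵥ x := rfl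

/-- The pivot step of the simplex method. If `v` is the unique maximizer of `a` in `V` and does not
maximize `c`, and `a` is generic, then the first face met when rotating `a` towards `c` is an edge
along which `c` increases. -/
lemma exists_improving_edge {n : ℕ} (V : Finset (Fin n → ℝ)) (a c v : Fin n → ℝ) (hv : v ∈ V)
    (hmax : ∀ w ∈ V, w ≠ v → a ⬝ᵥ w < a ⬝ᵥ v)
    (hgen : ∀ w ∈ V, ∀ w' ∈ V,
      a ⬝ᵥ ((c ⬝ᵥ w' - c ⬝ᵥ v) • (w - v) - (c ⬝ᵥ w - c ⬝ᵥ v) • (w' - v)) = 0 →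
        (c ⬝ᵥ w' - c ⬝ᵥ v) • (w - v) - (c ⬝ᵥ w - c ⬝ᵥ v) • (w' - v) = 0)
    (hc : ∃ w ∈ V, c ⬝ᵥ v < c ⬝ᵥ w) :
    ∃ F, IsExposed ℝ (convexHull ℝ (V : Set (Fin n → ℝ))) F ∧
      Module.finrank ℝ (vectorSpan ℝ F) = 1 ∧
      v ∈ F ∧ ∃ w ∈ V, w ∈ F ∧ c ⬝ᵥ v < c ⬝ᵥ w := by
  classical
  obtain ⟨w₀, hw₀, hmin⟩ := (V.filter fun w => c ⬝ᵥ v < c ⬝ᵥ w).exists_min_image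
    (fun w => (a ⬝ᵥ v - a ⬝ᵥ w) / (c ⬝ᵥ w - c ⬝ᵥ v))
    (by obtain ⟨w, hw, h⟩ := hc; exact ⟨w, by simp [hw, h]⟩)
  simp only [Finset.mem_filter, and_imp] at hw₀ hmin
  obtain ⟨hw₀V, hcw₀⟩ := hw₀
  set t := (a ⬝ᵥ v - a ⬝ᵥ w₀) / (c ⬝ᵥ w₀ - c ⬝ᵥ v) with ht
  have hne : w₀ ≠ v := by rintro rfl; exact lt_irrefl _ hcw₀
  have hcpos : 0 < c ⬝ᵥ w₀ - c ⬝ᵥ v := by linarith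
  have htpos : 0 < t := div_pos (by linarith [hmax w₀ hw₀V hne]) hcpos
  have ht0 : t * (c ⬝ᵥ w₀ - c ⬝ᵥ v) = a ⬝ᵥ v - a ⬝ᵥ w₀ := by
    rw [ht]; field_simp
  have hl : ∀ x, (a + t • c) ⬝ᵥ x = a ⬝ᵥ x + t * (c ⬝ᵥ x) := by
    intro x; simp [add_dotProduct, smul_dotProduct]
  have key : ∀ w ∈ (V : Set (Fin n → ℝ)), (a + t • c) ⬝ᵥ w ≤ (a + t • c) ⬝ᵥ v ∧
      ((a + t • c) ⬝ᵥ w = (a + t • c) ⬝ᵥ v → w - v ∈ Submodule.span ℝ {w₀ - v}) := by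
    intro w hw
    simp only [hl]
    by_cases hwv : w = v
    · subst hwv; simp
    have haw := hmax w hw hwv
    rcases lt_or_ge (c ⬝ᵥ v) (c ⬝ᵥ w) with hcw | hcw
    · have h1 := hmin w hw hcw
      rw [le_div_iff₀ (by linarith)] at h1
      refine ⟨by linarith, fun heq => ?_⟩
      have h2 := hgen w hw w₀ hw₀V (by
        simp only [dotProduct_sub, dotProduct_smul, smul_eq_mul]
        have h3 : a ⬝ᵥ w - a ⬝ᵥ v = - t * (c ⬝ᵥ w - c ⬝ᵥ v) := by linarith
        have h4 : a ⬝ᵥ w₀ - a ⬝ᵥ v = - t * (c ⬝ᵥ w₀ - c ⬝ᵥ v) := by linarith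
        rw [h3, h4]; ring)
      rw [Submodule.mem_span_singleton]
      refine ⟨(c ⬝ᵥ w - c ⬝ᵥ v) / (c ⬝ᵥ w₀ - c ⬝ᵥ v), ?_⟩
      rw [div_eq_inv_mul, mul_smul, ← sub_eq_zero.mp h2, inv_smul_smul₀ hcpos.ne']
    · have := mul_le_mul_of_nonneg_left hcw htpos.le
      exact ⟨by linarith, fun heq => by linarith⟩
  have hface := face_direction key
  have hvP := subset_convexHull ℝ (V : Set (Fin n → ℝ)) hv
  have hwP := subset_convexHull ℝ (V : Set (Fin n → ℝ)) hw₀V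
  let F := {x ∈ convexHull ℝ (V : Set (Fin n → ℝ)) |
    ∀ y ∈ convexHull ℝ (V : Set (Fin n → ℝ)), dotL (a + t • c) y ≤ dotL (a + t • c) x}
  have hvF : v ∈ F := ⟨hvP, fun y hy => (hface y hy).1⟩
  have hwF : w₀ ∈ F := by
    refine ⟨hwP, fun y hy => (hface y hy).1.trans (le_of_eq ?_)⟩
    rw [dotL_apply, hl, hl]; linarith
  have hFsub : ∀ x ∈ F, x - v ∈ Submodule.span ℝ {w₀ - v} := fun x hx =>
    (hface x hx.1).2 (le_antisymm (hface x hx.1).1 (hx.2 v hvP))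
  refine ⟨F, fun _ => ⟨_, rfl⟩, ?_, hvF, w₀, hw₀V, hwF, hcw₀⟩
  have : vectorSpan ℝ F = Submodule.span ℝ {w₀ - v} := by
    apply le_antisymm
    · rw [vectorSpan_def, Submodule.span_le]
      rintro _ ⟨x, hx, y, hy, rfl⟩
      have := Submodule.sub_mem _ (hFsub x hx) (hFsub y hy)
      simpa using this
    · rw [Submodule.span_singleton_le_iff_mem]
      exact vsub_mem_vectorSpan ℝ hwF hvF
  rw [this, finrank_span_singleton (sub_ne_zero.mpr hne)]

/-- Comonotone functionals have a common maximizer on a generalized permutohedron: a vertex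
maximizing a generic perturbation of `c + d` maximizes `c`, since an edge improving `c` would
improve `c + d` as well; by symmetry of the sum it then maximizes `d`. -/
lemma exists_common_max {n : ℕ} (V : Finset (Fin n → ℝ)) (hV : V.Nonempty)
    (hedges : ∀ F : Set (Fin n → ℝ), IsExposed ℝ (convexHull ℝ (V : Set (Fin n → ℝ))) F →
      Module.finrank ℝ (vectorSpan ℝ F) = 1 →
      ∃ i j : Fin n, i < j ∧ ∀ x ∈ F, ∀ y ∈ F, ∃ c : ℝ,
        x - y = c • (Pi.single i (1 : ℝ) - Pi.single j (1 : ℝ)))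
    (c d : Fin n → ℝ) (hcd : Comonotone c d) :
    ∃ v ∈ V, (∀ w ∈ V, c ⬝ᵥ w ≤ c ⬝ᵥ v) ∧ ∀ w ∈ V, d ⬝ᵥ w ≤ d ⬝ᵥ v := by
  classical
  let G : (Fin n → ℝ) → (Fin n → ℝ) → (Fin n → ℝ) → (Fin n → ℝ) → (Fin n → ℝ) := fun g v w w' =>
    (g ⬝ᵥ w' - g ⬝ᵥ v) • (w - v) - (g ⬝ᵥ w - g ⬝ᵥ v) • (w' - v)
  let U : Finset (Fin n → ℝ) := (V ×ˢ V).image (fun p => p.1 - p.2) ∪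
    ((V ×ˢ V ×ˢ V).image (fun p => G c p.1 p.2.1 p.2.2) ∪
      (V ×ˢ V ×ˢ V).image (fun p => G d p.1 p.2.1 p.2.2))
  have hU1 : ∀ v ∈ V, ∀ w ∈ V, v - w ∈ U := fun v hv w hw =>
    Finset.mem_union_left _ (Finset.mem_image.mpr ⟨(v, w), by simp [hv, hw], rfl⟩)
  have hU2 : ∀ v ∈ V, ∀ w ∈ V, ∀ w' ∈ V, G c v w w' ∈ U := fun v hv w hw w' hw' =>
    Finset.mem_union_right _ (Finset.mem_union_left _
      (Finset.mem_image.mpr ⟨(v, w, w'), by simp [hv, hw, hw'], rfl⟩))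
  have hU3 : ∀ v ∈ V, ∀ w ∈ V, ∀ w' ∈ V, G d v w w' ∈ U := fun v hv w hw w' hw' =>
    Finset.mem_union_right _ (Finset.mem_union_right _
      (Finset.mem_image.mpr ⟨(v, w, w'), by simp [hv, hw, hw'], rfl⟩))
  obtain ⟨b, hb⟩ := exists_generic (U : Set (Fin n → ℝ)) U.finite_toSet
  have hlim : ∀ x y : ℝ, Filter.Tendsto (fun ε : ℝ => x + ε * y) (nhdsWithin 0 (Set.Ioi 0))
      (nhds x) := by
    intro x y
    have : Continuous fun ε : ℝ => x + ε * y := by fun_prop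
    simpa using (this.tendsto 0).mono_left nhdsWithin_le_nhds
  have hA : ∀ᶠ ε in nhdsWithin (0 : ℝ) (Set.Ioi 0), ∀ u ∈ U, u ≠ 0 →
      (c + d) ⬝ᵥ u + ε * (b ⬝ᵥ u) ≠ 0 := by
    rw [Filter.eventually_all_finset]
    intro u hu
    by_cases h0 : u = 0
    · simp [h0]
    by_cases hx : (c + d) ⬝ᵥ u = 0
    · filter_upwards [self_mem_nhdsWithin] with ε hε _
      rw [hx, zero_add]
      exact mul_ne_zero (ne_of_gt hε) (hb u hu h0)
    · filter_upwards [(hlim _ (b ⬝ᵥ u)).eventually_ne hx] with ε hε _ using hε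
  have hB : ∀ᶠ ε in nhdsWithin (0 : ℝ) (Set.Ioi 0), ∀ u ∈ U, 0 < (c + d) ⬝ᵥ u →
      0 < (c + d) ⬝ᵥ u + ε * (b ⬝ᵥ u) := by
    rw [Filter.eventually_all_finset]
    intro u hu
    by_cases hx : 0 < (c + d) ⬝ᵥ u
    · filter_upwards [(hlim _ (b ⬝ᵥ u)).eventually_const_lt hx] with ε hε _ using hε
    · exact Filter.Eventually.of_forall fun ε h => absurd h hx
  obtain ⟨ε, hA, hB⟩ := (hA.and hB).exists
  have ha : ∀ u, (c + d + ε • b) ⬝ᵥ u = (c + d) ⬝ᵥ u + ε * (b ⬝ᵥ u) := by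
    intro u; simp [add_dotProduct, smul_dotProduct]
  simp only [← ha] at hA hB
  set a := c + d + ε • b
  obtain ⟨v, hv, hvmax⟩ := V.exists_max_image (fun x => a ⬝ᵥ x) hV
  have hstrict : ∀ w ∈ V, w ≠ v → a ⬝ᵥ w < a ⬝ᵥ v := by
    intro w hw hwv
    refine lt_of_le_of_ne (hvmax w hw) fun h => hA _ (hU1 w hw v hv) (sub_ne_zero.mpr hwv) ?_
    rw [dotProduct_sub, h, sub_self]
  have hsum : ∀ w ∈ V, (c + d) ⬝ᵥ w ≤ (c + d) ⬝ᵥ v := by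
    intro w hw
    by_contra! h
    have h1 := hB _ (hU1 w hw v hv) (by rw [dotProduct_sub]; linarith)
    rw [dotProduct_sub] at h1
    linarith [hvmax w hw]
  -- The argument for one of the two functionals, stated so that it applies to both.
  have key : ∀ g k : Fin n → ℝ, g + k = c + d → Comonotone g k →
      (∀ w ∈ V, ∀ w' ∈ V, G g v w w' ∈ U) → ∀ w ∈ V, g ⬝ᵥ w ≤ g ⬝ᵥ v := by
    intro g k hgk hcom hG
    by_contra! hne
    obtain ⟨F, hF, hdim, hvF, w, hw, hwF, hlt⟩ := exists_improving_edge V a g v hv hstrict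
      (fun w hw w' hw' h => by
        by_contra h0
        exact hA _ (hG w hw w' hw') h0 h) hne
    obtain ⟨i, j, -, hdir⟩ := hedges F hF hdim
    obtain ⟨r, hr⟩ := hdir w hwF v hvF
    have hval : ∀ f : Fin n → ℝ, f ⬝ᵥ w - f ⬝ᵥ v = r * (f i - f j) := by
      intro f
      rw [← dotProduct_sub, hr]
      simp [dotProduct_smul, dotProduct_sub]
    have h1 := hval g
    have h2 := hval k
    have h3 := hsum w hw
    rw [← hgk, add_dotProduct, add_dotProduct] at h3
    have h4 : 0 ≤ r ^ 2 * ((g i - g j) * (k i - k j)) := mul_nonneg (sq_nonneg r) (hcom i j)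
    have h5 : r ^ 2 * ((g i - g j) * (k i - k j)) =
        (g ⬝ᵥ w - g ⬝ᵥ v) * (k ⬝ᵥ w - k ⬝ᵥ v) := by rw [h1, h2]; ring
    have h6 : 0 < g ⬝ᵥ w - g ⬝ᵥ v := by linarith
    have h7 := nonneg_of_mul_nonneg_right (h5 ▸ h4) h6
    linarith
  exact ⟨v, hv, key c d rfl hcd fun w hw w' hw' => hU2 v hv w hw w' hw',
    key d c (add_comm d c) (fun i j => mul_comm (c i - c j) (d i - d j) ▸ hcd i j)
      fun w hw w' hw' => hU3 v hv w hw w' hw'⟩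

/-! ### Comonotone additive functions -/

/-- The indicator vector of `S`. -/
def indic {n : ℕ} (S : Finset (Fin n)) : Fin n → ℝ := fun i => if i ∈ S then 1 else 0

/-- A comonotone additive, positively homogeneous function is determined by its values at the
indicator vectors: every vector is a comonotone sum of a constant vector and nonnegative multiples
of the indicators of its superlevel sets. -/
lemma eq_zero_of_comonotone {n : ℕ} (f : (Fin n → ℝ) → ℝ)
    (hadd : ∀ c d, Comonotone c d → f (c + d) = f c + f d)
    (hsmul : ∀ (t : ℝ) c, 0 ≤ t → f (t • c) = t * f c)
    (hind : ∀ S, f (indic S) = 0) (c : Fin n → ℝ) : f c = 0 := by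
  have h0 : f 0 = 0 := by simpa using hsmul 0 0 le_rfl
  have hpos : ∀ k : ℕ, ∀ c : Fin n → ℝ, (∀ i, 0 ≤ c i) →
      (Finset.univ.filter fun i => 0 < c i).card ≤ k → f c = 0 := by
    intro k
    induction k with
    | zero =>
      intro c hc hk
      have : c = 0 := by
        ext i
        have h := Finset.card_eq_zero.mp (Nat.le_zero.mp hk)
        have := Finset.filter_eq_empty_iff.mp h (Finset.mem_univ i)
        exact le_antisymm (not_lt.mp this) (hc i)
      rw [this, h0]
    | succ k ih =>
      intro c hc hk
      set S := Finset.univ.filter fun i => 0 < c i with hS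
      have hSm : ∀ i, i ∈ S ↔ 0 < c i := by intro i; simp [hS]
      rcases S.eq_empty_or_nonempty with he | hne
      · exact ih c hc (by rw [← hS, he]; simp)
      obtain ⟨i₀, hi₀, hmin⟩ := S.exists_min_image c hne
      have hδ := (hSm i₀).mp hi₀
      have hc' : ∀ i, 0 ≤ (c - c i₀ • indic S) i := by
        intro i
        simp only [Pi.sub_apply, Pi.smul_apply, indic, smul_eq_mul]
        split_ifs with h
        · linarith [hmin i h]
        · linarith [hc i]
      have hz : ∀ i, i ∉ S → (c - c i₀ • indic S) i = 0 := by
        intro i h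
        have h1 := hc i
        have h2 := mt (hSm i).mpr h
        simp only [Pi.sub_apply, Pi.smul_apply, indic, smul_eq_mul, h, if_false]
        linarith
      have hcom : Comonotone (c i₀ • indic S) (c - c i₀ • indic S) := by
        intro i j
        by_cases hi : i ∈ S <;> by_cases hj : j ∈ S
        · simp [indic, hi, hj]
        · rw [hz j hj]
          have := hc' i
          simp only [Pi.smul_apply, indic, hi, hj, if_true, if_false, smul_eq_mul]
          nlinarith
        · rw [hz i hi]
          have := hc' j
          simp only [Pi.smul_apply, indic, hi, hj, if_true, if_false, smul_eq_mul]
          nlinarith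
        · simp [indic, hi, hj]
      have hlt : (Finset.univ.filter fun i => 0 < (c - c i₀ • indic S) i) ⊂ S := by
        rw [Finset.ssubset_iff_of_subset]
        · exact ⟨i₀, hi₀, by simp [indic, hi₀]⟩
        · intro i hi
          by_contra h
          have := (Finset.mem_filter.mp hi).2
          rw [hz i h] at this
          exact lt_irrefl _ this
      have hd := ih _ hc' (by have := Finset.card_lt_card hlt; omega)
      have := hadd _ _ hcom
      rw [add_sub_cancel, hd, hsmul _ _ hδ.le, hind] at this
      simpa using this
  have hconst : ∀ (t : ℝ) (d : Fin n → ℝ), f (d + fun _ => t) = f d + f fun _ => t :=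
    fun t d => hadd _ _ fun i j => by simp
  have h1 : f (fun _ => 1) = 0 := by
    have h := hind Finset.univ
    have e : (indic Finset.univ : Fin n → ℝ) = fun _ => 1 := by ext; simp [indic]
    rwa [e] at h
  have hneg : f (fun _ => -1) = 0 := by
    have := hconst (-1) fun _ => 1
    rw [h1, zero_add] at this
    rw [← this, ← h0]
    congr 1
    ext i
    simp
  have hc0 : ∀ i, -(∑ j, |c j|) ≤ c i := by
    intro i
    have := Finset.single_le_sum (f := fun j => |c j|) (fun j _ => abs_nonneg _)
      (Finset.mem_univ i)
    have := neg_abs_le (c i)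
    simp only at *
    linarith
  have hT : 0 ≤ ∑ j, |c j| := Finset.sum_nonneg fun j _ => abs_nonneg _
  set T := ∑ j, |c j|
  have h2 : f (c + fun _ => T) = 0 :=
    hpos n _ (fun i => by have := hc0 i; simp only [Pi.add_apply]; linarith)
      ((Finset.card_le_univ _).trans (by simp))
  have h3 : f (fun _ => T) = 0 := by
    have := hsmul T (fun _ => 1) hT
    rw [h1] at this
    simpa [Pi.smul_def] using this
  have := hconst T c
  linarith

/-- The maximum of the coordinates over `I` is comonotone additive. -/
lemma sup'_add_of_comonotone {n : ℕ} (I : Finset (Fin n)) (hI : I.Nonempty) {c d : Fin n → ℝ}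
    (h : Comonotone c d) : I.sup' hI (c + d) = I.sup' hI c + I.sup' hI d := by
  obtain ⟨i, hi, hmax⟩ := I.exists_max_image (c + d) hI
  have hc : ∀ j ∈ I, c j ≤ c i := by
    intro j hj
    by_contra! hlt
    have h1 := h j i
    have h2 := hmax j hj
    simp only [Pi.add_apply] at h2
    nlinarith
  have hd : ∀ j ∈ I, d j ≤ d i := by
    intro j hj
    by_contra! hlt
    have h1 := h j i
    have h2 := hmax j hj
    simp only [Pi.add_apply] at h2
    nlinarith
  have e : ∀ g : Fin n → ℝ, (∀ j ∈ I, g j ≤ g i) → I.sup' hI g = g i := fun g hg =>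
    le_antisymm (Finset.sup'_le _ _ hg) (Finset.le_sup' g hi)
  rw [e _ hmax, e _ hc, e _ hd, Pi.add_apply]

lemma sup'_smul {n : ℕ} (I : Finset (Fin n)) (hI : I.Nonempty) (c : Fin n → ℝ) {t : ℝ}
    (ht : 0 ≤ t) : I.sup' hI (t • c) = t * I.sup' hI c := by
  obtain ⟨i, hi, hmax⟩ := I.exists_max_image c hI
  have e : ∀ g : Fin n → ℝ, (∀ j ∈ I, g j ≤ g i) → I.sup' hI g = g i := fun g hg =>
    le_antisymm (Finset.sup'_le _ _ hg) (Finset.le_sup' g hi)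
  rw [e _ hmax, e (t • c) fun j hj => mul_le_mul_of_nonneg_left (hmax j hj) ht]
  rfl

/-- The support function of `Δ_I` is the maximum of the coordinates over `I`. -/
lemma supVal_simpA {n : ℕ} (I : Finset (Fin n)) (hI : I.Nonempty) (c : Fin n → ℝ) :
    SupVal (simpA n I) c (I.sup' hI c) := by
  obtain ⟨i, hi, hmax⟩ := I.exists_max_image c hI
  have e : I.sup' hI c = c ⬝ᵥ Pi.single i 1 := by
    rw [dotProduct_single_one]
    exact le_antisymm (Finset.sup'_le _ _ hmax) (Finset.le_sup' c hi)
  rw [e]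
  refine supVal_convexHull ⟨i, hi, rfl⟩ ?_
  rintro _ ⟨j, hj, rfl⟩
  simpa using hmax j hj

/-! ### Möbius inversion -/

/-- The Möbius inverse of `w` on the Boolean lattice, by recursion. -/
def mob {n : ℕ} (w : Finset (Fin n) → ℝ) (S : Finset (Fin n)) : ℝ :=
  w S - ∑ I ∈ S.ssubsets.attach, mob w I.1
termination_by S.card
decreasing_by exact Finset.card_lt_card (Finset.mem_ssubsets.mp I.2)

lemma sum_mob {n : ℕ} (w : Finset (Fin n) → ℝ) (S : Finset (Fin n)) :
    ∑ I ∈ S.powerset, mob w I = w S := by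
  have h : S.powerset = insert S S.ssubsets := by
    ext I
    simp only [Finset.mem_powerset, Finset.mem_insert, Finset.mem_ssubsets]
    exact le_iff_eq_or_lt
  rw [h, Finset.sum_insert (by simp), mob, Finset.sum_attach S.ssubsets (mob w)]
  ring

lemma sup'_indic {n : ℕ} (I : Finset (Fin n)) (hI : I.Nonempty) (S : Finset (Fin n)) :
    I.sup' hI (indic S) = if I ⊆ Sᶜ then 0 else 1 := by
  split_ifs with h
  · refine le_antisymm (Finset.sup'_le _ _ fun i hi => ?_) ?_
    · have := Finset.mem_compl.mp (h hi)
      simp [indic, this]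
    · obtain ⟨i, hi⟩ := hI
      refine le_trans ?_ (Finset.le_sup' _ hi)
      simp only [indic]; split_ifs <;> norm_num
  · obtain ⟨i, hi, hiS⟩ := Finset.not_subset.mp h
    rw [Finset.mem_compl, not_not] at hiS
    refine le_antisymm (Finset.sup'_le _ _ fun i hi => ?_) ?_
    · simp only [indic]; split_ifs <;> norm_num
    · refine le_trans ?_ (Finset.le_sup' _ hi)
      simp [indic, hiS]

/-- Any set function vanishing at `∅` is interpolated on indicator vectors by a combination of the
support functions of the simplices. -/
lemma exists_coeff {n : ℕ} (z : Finset (Fin n) → ℝ) (hz : z ∅ = 0) :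
    ∃ y : {I : Finset (Fin n) // I.Nonempty} → ℝ,
      ∀ S, ∑ I, y I * I.1.sup' I.2 (indic S) = z S := by
  classical
  -- `w S` is to be the total coefficient of the simplices `Δ_I` with `I ⊆ S`.
  let w : Finset (Fin n) → ℝ := fun S => z Finset.univ - z Sᶜ
  refine ⟨fun I => mob w I.1, fun S => ?_⟩
  have hw0 : mob w ∅ = 0 := by
    have := sum_mob w ∅
    simpa [w] using this
  have h1 : ∀ I : {I : Finset (Fin n) // I.Nonempty}, mob w I.1 * I.1.sup' I.2 (indic S) =
      mob w I.1 - if I.1 ⊆ Sᶜ then mob w I.1 else 0 := by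
    intro I
    rw [sup'_indic]
    split_ifs <;> ring
  rw [Finset.sum_congr rfl fun I _ => h1 I]
  have h2 : ∑ I : {I : Finset (Fin n) // I.Nonempty},
      (mob w I.1 - if I.1 ⊆ Sᶜ then mob w I.1 else 0) =
      ∑ I : Finset (Fin n), (mob w I - if I ⊆ Sᶜ then mob w I else 0) := by
    rw [← Finset.sum_subtype (Finset.univ.filter fun I => I.Nonempty) (by simp)
      (fun I => mob w I - if I ⊆ Sᶜ then mob w I else 0)]
    refine Finset.sum_subset (Finset.filter_subset _ _) fun I _ hI => ?_
    have : I = ∅ := by simpa using hI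
    simp [this, hw0]
  have h3 := sum_mob w Finset.univ
  have h4 := sum_mob w Sᶜ
  rw [Finset.powerset_univ] at h3
  rw [h2, Finset.sum_sub_distrib, h3, ← Finset.sum_filter]
  have h5 : (Finset.univ.filter fun I => I ⊆ Sᶜ) = Sᶜ.powerset := by ext; simp
  rw [h5, h4]
  simp [w, hz]

open scoped Classical in
/-- Every type A generalized permutohedron `P ⊂ ℝ^n` (a polytope each of whose
edges, i.e. one-dimensional faces, is parallel to `e_i − e_j` for some `i < j`) is a signed
Minkowski sum `Σ_{∅ ≠ I ⊆ [n]} y_I Δ_I`: there are reals `y_I` with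
`P + Σ_{y_I < 0} (−y_I)Δ_I = Σ_{y_I ≥ 0} y_I Δ_I`. -/
theorem stmt17 (n : ℕ) (P : Set (Fin n → ℝ))
    (hpoly : ∃ V : Finset (Fin n → ℝ), V.Nonempty ∧ P = convexHull ℝ ↑V)
    (hedges : ∀ F : Set (Fin n → ℝ), IsExposed ℝ P F →
      Module.finrank ℝ (vectorSpan ℝ F) = 1 →
      ∃ i j : Fin n, i < j ∧ ∀ x ∈ F, ∀ y ∈ F, ∃ c : ℝ,
        x - y = c • (Pi.single i (1 : ℝ) - Pi.single j (1 : ℝ))) :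
    ∃ y : {I : Finset (Fin n) // I.Nonempty} → ℝ,
      P + ∑ I ∈ Finset.univ.filter
            (fun I : {I : Finset (Fin n) // I.Nonempty} => y I < 0),
          (-y I) • simpA n I.1 =
        ∑ I ∈ Finset.univ.filter
            (fun I : {I : Finset (Fin n) // I.Nonempty} => 0 ≤ y I),
          y I • simpA n I.1 := by
  classical
  obtain ⟨V, hV, rfl⟩ := hpoly
  have hcommon := exists_common_max V hV hedges
  have hex : ∀ c : Fin n → ℝ, ∃ m, SupVal (convexHull ℝ (V : Set (Fin n → ℝ))) c m := by
    intro c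
    obtain ⟨v, hv, hmax⟩ := V.exists_max_image (fun x => c ⬝ᵥ x) hV
    exact ⟨_, supVal_convexHull hv hmax⟩
  choose h hh using hex
  have hadd : ∀ c d, Comonotone c d → h (c + d) = h c + h d := by
    intro c d hcd
    obtain ⟨v, hv, hc, hd⟩ := hcommon c d hcd
    have e1 := (hh c).unique (supVal_convexHull hv hc)
    have e2 := (hh d).unique (supVal_convexHull hv hd)
    have e3 := (hh (c + d)).unique (supVal_convexHull hv fun w hw => by
      rw [add_dotProduct, add_dotProduct]; exact add_le_add (hc w hw) (hd w hw))
    rw [e1, e2, e3, add_dotProduct]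
  have hsmul : ∀ (t : ℝ) c, 0 ≤ t → h (t • c) = t * h c := by
    intro t c ht
    obtain ⟨v, hv, hmax⟩ := V.exists_max_image (fun x => c ⬝ᵥ x) hV
    have e1 := (hh c).unique (supVal_convexHull hv hmax)
    have e2 := (hh (t • c)).unique (supVal_convexHull hv fun w hw => by
      rw [smul_dotProduct, smul_dotProduct]; exact mul_le_mul_of_nonneg_left (hmax w hw) ht)
    rw [e1, e2, smul_dotProduct, smul_eq_mul]
  obtain ⟨y, hy⟩ := exists_coeff (fun S => h (indic S)) (by
    have h0 := hsmul 0 0 le_rfl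
    have : (indic ∅ : Fin n → ℝ) = 0 := by ext; simp [indic]
    simpa [this] using h0)
  have hmain : ∀ c, h c = ∑ I, y I * I.1.sup' I.2 c := by
    intro c
    refine sub_eq_zero.mp (eq_zero_of_comonotone
      (fun c => h c - ∑ I, y I * I.1.sup' I.2 c) ?_ ?_ ?_ c)
    · intro c d hcd
      simp only [hadd c d hcd, sup'_add_of_comonotone _ _ hcd, mul_add, Finset.sum_add_distrib]
      ring
    · intro t c ht
      simp only [hsmul t c ht, sup'_smul _ _ _ ht, mul_sub, Finset.mul_sum]
      congr 1
      exact Finset.sum_congr rfl fun I _ => by ring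
    · intro S
      simp only [hy S, sub_self]
  have hPc : IsCompact (convexHull ℝ (V : Set (Fin n → ℝ))) := V.finite_toSet.isCompact_convexHull ℝ
  have hsc : ∀ I, IsCompact (simpA n I) := fun I =>
    (I.finite_toSet.image _).isCompact_convexHull ℝ
  have hsumc : ∀ (s : Finset {I : Finset (Fin n) // I.Nonempty}) (t : _ → ℝ),
      IsCompact (∑ I ∈ s, t I • simpA n I.1) ∧ Convex ℝ (∑ I ∈ s, t I • simpA n I.1) := by
    intro s t
    induction s using Finset.induction_on with
    | empty =>
      rw [Finset.sum_empty, ← Set.singleton_zero]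
      exact ⟨isCompact_singleton, convex_singleton _⟩
    | insert a s ha ih =>
      rw [Finset.sum_insert ha]
      exact ⟨((hsc a.1).smul _).add ih.1, ((convex_convexHull ℝ _).smul _).add ih.2⟩
  refine ⟨y, ?_⟩
  have hsup : ∀ c, SupVal (∑ I ∈ Finset.univ.filter
        (fun I : {I : Finset (Fin n) // I.Nonempty} => 0 ≤ y I), y I • simpA n I.1) c
      (∑ I ∈ Finset.univ.filter (fun I => 0 ≤ y I), y I * I.1.sup' I.2 c) := fun c =>
    SupVal.sum _ fun I hI => (supVal_simpA I.1 I.2 c).smul (Finset.mem_filter.mp hI).2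
  have hsup' : ∀ c, SupVal (convexHull ℝ (V : Set (Fin n → ℝ)) + ∑ I ∈ Finset.univ.filter
        (fun I : {I : Finset (Fin n) // I.Nonempty} => y I < 0), (-y I) • simpA n I.1) c
      (∑ I ∈ Finset.univ.filter (fun I => 0 ≤ y I), y I * I.1.sup' I.2 c) := by
    intro c
    have h1 := (hh c).add (SupVal.sum (Finset.univ.filter
        (fun I : {I : Finset (Fin n) // I.Nonempty} => y I < 0))
        fun I hI => (supVal_simpA I.1 I.2 c).smul (t := -y I)
          (by linarith [(Finset.mem_filter.mp hI).2]))
    convert h1 using 1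
    rw [hmain c, ← Finset.sum_filter_add_sum_filter_not Finset.univ (fun I => 0 ≤ y I)]
    simp [not_le]
  exact Set.Subset.antisymm
    (subset_of_supVal (hsumc _ _).2 (hsumc _ _).1.isClosed fun c => ⟨_, hsup' c, hsup c⟩)
    (subset_of_supVal ((convex_convexHull ℝ _).add (hsumc _ _).2)
      (hPc.add (hsumc _ _).1).isClosed fun c => ⟨_, hsup c, hsup' c⟩)
end
end
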